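/- arXiv:1403.5917 — 6 statements merged into one kernel-verified Lean document; each statement's English description precedes it below -/
import Mathlib

section
/- Let k be a field, 𝒜 an abelian category with enough projectives, and F : 𝒜 → Vect_k an additive functor into the category of k-vector spaces, with left derived functors L_p F (p ≥ 0). Call an object X of 𝒜 homologically finite if L_p F(X) is finite-dimensional over k for every p ≥ 0, and i-homologically finite if L_p F(X) is finite-dimensional for every 0 ≤ p ≤ i. Let C : 0 → C_{n−1} → ⋯ → C_1 → C_0 → 0 be a bounded chain complex in 𝒜 all of whose terms C_j are homologically finite. Fix i ≥ 0 and assume that the homology object H_j(C) is i-homologically finite for every j > 0. Then H_0(C) is (i+2)-homologically finite. -/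
open CategoryTheory CategoryTheory.Limits

/-!
Write `Z_j` and `B_j` for the cycles and boundaries of `C`. By the long exact sequences of left
derived functors of `0 → B_j → Z_j → H_j → 0` and `0 → Z_{j+1} → C_{j+1} → B_j → 0`, the object
`L_{p+1} F B_j` is finite as soon as `L_{p+1} F C_{j+1}`, `L_p F H_{j+1}` and `L_p F B_{j+1}` are,
while `L_0 F B_j` is a quotient of `L_0 F C_{j+1}`; so induction on `p` applies. The sequence
`0 → B_0 → C_0 → H_0 → 0` gains one more degree: in total, `L_p F H_0` is controlled by the
`L_q F C_j` with `q + j = p` and the `L_q F H_j` with `j > 0` and `q + j = p - 1`.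
-/

section Cone

variable {A : Type*} [Category* A] [Preadditive A] [HasBinaryBiproducts A]
  {ι : Type*} {c : ComplexShape ι}

open HomologicalComplex in
/-- The contraction `(a, b) ↦ (b, 0)` of the cone of the identity of `K`, through which this cone
can be added to a complex without changing its homology. -/
noncomputable def homotopyCofiberIdContraction [DecidableRel c.Rel]
    (K : HomologicalComplex A c) (hc : ∀ j, ∃ i, c.Rel i j) :
    Homotopy (𝟙 (homotopyCofiber (𝟙 K))) 0 where
  hom i j := if h : c.Rel j i then
    homotopyCofiber.sndX (𝟙 K) i ≫ homotopyCofiber.inlX (𝟙 K) i j h else 0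
  zero i j h := dif_neg h
  comm j := by
    obtain ⟨i, hij⟩ := hc j
    rw [prevD_eq _ hij, dif_pos hij]
    by_cases hj : c.Rel j (c.next j)
    · rw [dNext_eq _ hj, dif_pos hj]
      apply homotopyCofiber.ext_from_X (𝟙 K) _ j hj
      all_goals
        simp [homotopyCofiber.inlX_d (𝟙 K) i j _ hij hj, homotopyCofiber.d_sndX_assoc _ _ _ hj]
    · rw [dNext_eq_zero _ _ hj]
      apply homotopyCofiber.ext_from_X' (𝟙 K) j hj
      simp [homotopyCofiber.inlX_d' (𝟙 K) i j hij hj]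

/-- Adding a contractible summand does not change the homotopy type of a complex. -/
noncomputable def biprodFstHomotopyEquiv (K : HomologicalComplex A c) {L : HomologicalComplex A c}
    (h : Homotopy (𝟙 L) 0) : HomotopyEquiv (K ⊞ L) K where
  hom := biprod.fst
  inv := biprod.inl
  homotopyHomInvId :=
    have h₀ : Homotopy (biprod.snd ≫ biprod.inr : K ⊞ L ⟶ K ⊞ L) 0 :=
      (Homotopy.ofEq (by simp)).trans
        (((h.compRight biprod.inr).compLeft biprod.snd).trans (Homotopy.ofEq (by simp)))
    (Homotopy.ofEq (by simp)).trans
      (((Homotopy.refl (biprod.fst ≫ biprod.inl)).add h₀.symm).trans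
        (Homotopy.ofEq biprod.total))
  homotopyInvHomId := Homotopy.ofEq (by simp)

lemma projective_homotopyCofiber_X [DecidableRel c.Rel] {K L : HomologicalComplex A c} (φ : K ⟶ L)
    [∀ i, Projective (K.X i)] [∀ i, Projective (L.X i)] (i : ι) :
    Projective ((HomologicalComplex.homotopyCofiber φ).X i) := by
  by_cases hi : c.Rel i (c.next i)
  · exact .of_iso (HomologicalComplex.homotopyCofiber.XIsoBiprod φ i _ hi).symm inferInstance
  · exact .of_iso (HomologicalComplex.homotopyCofiber.XIso φ i hi).symm inferInstance

end Cone

section Horseshoe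

lemma projective_X₃_of_splitting {A : Type*} [Category* A] [Preadditive A]
    {S : ShortComplex A} (s : S.Splitting) [Projective S.X₂] : Projective S.X₃ :=
  Retract.projective ⟨s.s, S.g, s.s_g⟩

variable {A : Type*} [Category* A] [Abelian A]

open HomologicalComplex in
/-- The middle complex is `L ⊞ cone (𝟙 K)`, into which `K` maps by `φ` and by the inclusion in its
cone, which has a degreewise retraction. -/
lemma exists_isSplitMono_f_quasiIso_fac {ι : Type*} {c : ComplexShape ι}
    (hc : ∀ j, ∃ i, c.Rel i j) {K L : HomologicalComplex A c} (φ : K ⟶ L)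
    [∀ i, Projective (K.X i)] [∀ i, Projective (L.X i)] :
    ∃ (M : HomologicalComplex A c) (f : K ⟶ M) (p : M ⟶ L),
      f ≫ p = φ ∧ QuasiIso p ∧ (∀ i, Projective (M.X i)) ∧ ∀ i, IsSplitMono (f.f i) := by
  classical
  let E := homotopyCofiber (𝟙 K)
  refine ⟨L ⊞ E, biprod.lift φ (homotopyCofiber.inr (𝟙 K)), biprod.fst, biprod.lift_fst _ _,
    (biprodFstHomotopyEquiv L (homotopyCofiberIdContraction K hc)).quasiIso_hom,
    fun i ↦ ?_, fun i ↦ ?_⟩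
  · have := projective_homotopyCofiber_X (𝟙 K) i
    exact .of_iso (biprodXIso L E i).symm inferInstance
  · have hsnd := congr_hom (biprod.lift_snd φ (homotopyCofiber.inr (𝟙 K))) i
    rw [comp_f] at hsnd
    exact ⟨⟨(biprod.snd : L ⊞ E ⟶ E).f i ≫ homotopyCofiber.sndX (𝟙 K) i, by
      rw [reassoc_of% hsnd]; exact homotopyCofiber.inrX_sndX _ _⟩⟩

lemma projective_cokernel_X {ι : Type*} {c : ComplexShape ι} {K L : HomologicalComplex A c}
    (f : K ⟶ L) [Mono f] (i : ι) [IsSplitMono (f.f i)] [Projective (L.X i)] :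
    Projective ((cokernel f).X i) := by
  let S := ShortComplex.mk f (cokernel.π f) (cokernel.condition f)
  have hS : S.ShortExact := { exact := ShortComplex.exact_cokernel f }
  have hSi := hS.map_of_exact (HomologicalComplex.eval A c i)
  let r : L.X i ⟶ K.X i := retraction (f.f i)
  have : Projective (S.map (HomologicalComplex.eval A c i)).X₂ := ‹Projective (L.X i)›
  exact projective_X₃_of_splitting
    (.ofExactOfRetraction _ hSi.exact r (IsSplitMono.id (f.f i)) hSi.epi_g)

/-- The horseshoe lemma. The resolution of `S.X₃` is the cokernel of a degreewise split lift of
`S.f` to resolutions; that it is one follows from the five lemma. -/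
lemma exists_projectiveResolution_shortExact [EnoughProjectives A] {S : ShortComplex A}
    (hS : S.ShortExact) :
    ∃ (P : ProjectiveResolution S.X₁) (Q : ProjectiveResolution S.X₂)
      (R : ProjectiveResolution S.X₃) (f : P.complex ⟶ Q.complex) (g : Q.complex ⟶ R.complex)
      (w : f ≫ g = 0), (ShortComplex.mk f g w).ShortExact := by
  let P := projectiveResolution S.X₁
  let Q₀ := projectiveResolution S.X₂
  obtain ⟨M, f, p, hfp, hp, hM, hf⟩ := exists_isSplitMono_f_quasiIso_fac (by simp)
    (ProjectiveResolution.lift S.f P Q₀)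
  have : Mono f := HomologicalComplex.mono_of_mono_f f inferInstance
  let Q : ProjectiveResolution S.X₂ := { complex := M, π := p ≫ Q₀.π }
  let single := ChainComplex.single₀ A
  have comm : f ≫ Q.π = P.π ≫ single.map S.f := by
    rw [reassoc_of% hfp, ProjectiveResolution.lift_commutes]
  let T := ShortComplex.mk f (cokernel.π f) (cokernel.condition f)
  have hT : T.ShortExact := { exact := ShortComplex.exact_cokernel f }
  let π₃ : cokernel f ⟶ single.obj S.X₃ := cokernel.desc f (Q.π ≫ single.map S.g) (by
    rw [reassoc_of% comm, ← Functor.map_comp, S.zero, Functor.map_zero, comp_zero])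
  let augmentation : T ⟶ S.map single :=
    { τ₁ := P.π, τ₂ := Q.π, τ₃ := π₃, comm₁₂ := comm.symm, comm₂₃ := (cokernel.π_desc _ _ _).symm }
  have hπ₃ : QuasiIso π₃ := HomologicalComplex.HomologySequence.quasiIso_τ₃ augmentation hT
    (hS.map_of_exact single) P.quasiIso Q.quasiIso
  exact ⟨P, Q, { complex := cokernel f, projective := fun n ↦ projective_cokernel_X f n, π := π₃ },
    f, cokernel.π f, cokernel.condition f, hT⟩

end Horseshoe

section LeftDerived

variable {A : Type*} [Category* A] [Abelian A] [EnoughProjectives A]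
  {B : Type*} [Category* B] [Abelian B] (F : A ⥤ B) [F.Additive] {S : ShortComplex A}

/-- The long exact sequence of left derived functors, encoded as the homology sequence of a short
exact sequence of complexes. -/
lemma exists_shortExact_leftDerived_iso_homology (hS : S.ShortExact) :
    ∃ T : ShortComplex (ChainComplex B ℕ), T.ShortExact ∧ ∀ p,
      Nonempty ((F.leftDerived p).obj S.X₁ ≅ T.X₁.homology p) ∧
      Nonempty ((F.leftDerived p).obj S.X₂ ≅ T.X₂.homology p) ∧
      Nonempty ((F.leftDerived p).obj S.X₃ ≅ T.X₃.homology p) := by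
  obtain ⟨P, Q, R, f, g, w, hT⟩ := exists_projectiveResolution_shortExact hS
  refine ⟨(ShortComplex.mk f g w).map (F.mapHomologicalComplex _),
    HomologicalComplex.shortExact_of_degreewise_shortExact _ fun n ↦ ?_, fun p ↦
    ⟨⟨P.isoLeftDerivedObj F p⟩, ⟨Q.isoLeftDerivedObj F p⟩, ⟨R.isoLeftDerivedObj F p⟩⟩⟩
  have hTn := hT.map_of_exact (HomologicalComplex.eval A _ n)
  have : Projective ((ShortComplex.mk f g w).map (HomologicalComplex.eval A _ n)).X₃ :=
    R.projective n
  exact (hTn.splittingOfProjective.map F).shortExact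

variable (P : ObjectProperty B) [P.IsSerreClass]

lemma prop_leftDerived_X₂_of_shortExact (hS : S.ShortExact) {p : ℕ}
    (h₁ : P ((F.leftDerived p).obj S.X₁)) (h₃ : P ((F.leftDerived p).obj S.X₃)) :
    P ((F.leftDerived p).obj S.X₂) := by
  obtain ⟨T, hT, e⟩ := exists_shortExact_leftDerived_iso_homology F hS
  obtain ⟨⟨e₁⟩, ⟨e₂⟩, ⟨e₃⟩⟩ := e p
  exact P.prop_of_iso e₂.symm <|
    P.prop_X₂_of_exact (hT.homology_exact₂ p) (P.prop_of_iso e₁ h₁) (P.prop_of_iso e₃ h₃)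

/-- `q + 1 = p` makes the statement cover `p = 0`, where `L_0 F` preserves epimorphisms. -/
lemma prop_leftDerived_X₃_of_shortExact (hS : S.ShortExact) {p : ℕ}
    (h₂ : P ((F.leftDerived p).obj S.X₂))
    (h₁ : ∀ q, q + 1 = p → P ((F.leftDerived q).obj S.X₁)) :
    P ((F.leftDerived p).obj S.X₃) := by
  obtain ⟨T, hT, e⟩ := exists_shortExact_leftDerived_iso_homology F hS
  obtain ⟨-, ⟨e₂⟩, ⟨e₃⟩⟩ := e p
  refine P.prop_of_iso e₃.symm ?_
  cases p with
  | zero =>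
    have := hT.epi_g
    have := HomologicalComplex.epi_homologyMap_of_epi_of_not_rel T.g 0 (by simp)
    exact P.prop_of_epi (HomologicalComplex.homologyMap T.g 0) (P.prop_of_iso e₂ h₂)
  | succ q =>
    obtain ⟨⟨e₁⟩, -⟩ := e q
    exact P.prop_X₂_of_exact (hT.homology_exact₃ (q + 1) q rfl)
      (P.prop_of_iso e₂ h₂) (P.prop_of_iso e₁ (h₁ q rfl))

end LeftDerived

section Boundaries

variable {A : Type*} [Category* A] [Abelian A] {ι : Type*} {c : ComplexShape ι}
  (K : HomologicalComplex A c)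

/-- The boundaries `B_j` of a complex, as the kernel of `Z_j → H_j`. -/
noncomputable abbrev boundaries (j : ι) : A := kernel (K.homologyπ j)

/-- The map `K_i → B_j` induced by the differential. -/
noncomputable def toBoundaries (i j : ι) : K.X i ⟶ boundaries K j :=
  kernel.lift _ (K.toCycles i j) (K.toCycles_comp_homologyπ i j)

lemma toBoundaries_comp_ι_comp_iCycles (i j : ι) :
    toBoundaries K i j ≫ kernel.ι (K.homologyπ j) ≫ K.iCycles j = K.d i j := by
  simp [toBoundaries]

lemma iCycles_comp_toBoundaries (i j : ι) : K.iCycles i ≫ toBoundaries K i j = 0 := by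
  rw [← cancel_mono (kernel.ι (K.homologyπ j)), ← cancel_mono (K.iCycles j)]
  simp [toBoundaries]

lemma epi_toBoundaries {i j : ι} (hij : c.Rel i j) : Epi (toBoundaries K i j) :=
  have exact : (ShortComplex.mk _ _ (K.toCycles_comp_homologyπ i j)).Exact :=
    ShortComplex.exact_of_g_is_cokernel _ (K.homologyIsCokernel i j (c.prev_eq' hij))
  exact.epi_kernelLift

lemma shortExact_boundaries_cycles_homology (j : ι) :
    (ShortComplex.mk (kernel.ι (K.homologyπ j)) (K.homologyπ j)
      (kernel.condition _)).ShortExact where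
  exact := ShortComplex.exact_kernel _

lemma shortExact_cycles_X_boundaries {i j : ι} (hij : c.Rel i j) :
    (ShortComplex.mk (K.iCycles i) (toBoundaries K i j)
      (iCycles_comp_toBoundaries K i j)).ShortExact where
  exact := ShortComplex.exact_of_f_is_kernel _ <|
    KernelFork.IsLimit.ofι' _ _ fun g hg ↦
      ⟨K.liftCycles g j (c.next_eq' hij) (by
        rw [← toBoundaries_comp_ι_comp_iCycles, reassoc_of% hg, zero_comp]),
        K.liftCycles_i _ _ _ _⟩
  epi_g := epi_toBoundaries K hij

end Boundaries

section FinitelyGenerated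

universe v u

instance isSerreClass_isFG (R : Type u) [Ring R] [IsNoetherianRing R] :
    (ModuleCat.isFG.{v} R).IsSerreClass where
  exists_zero := ⟨.of R PUnit, ModuleCat.isZero_of_subsingleton _,
    inferInstanceAs (Module.Finite R PUnit.{v + 1})⟩
  prop_of_mono f _ (_ : Module.Finite R _) :=
    Module.Finite.of_injective f.hom ((ModuleCat.mono_iff_injective f).1 inferInstance)
  prop_of_epi f _ (_ : Module.Finite R _) :=
    Module.Finite.of_surjective f.hom ((ModuleCat.epi_iff_surjective f).1 inferInstance)
  prop_X₂_of_shortExact hS (_ : Module.Finite R _) (_ : Module.Finite R _) :=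
    Module.Finite.of_exact
      ((ShortComplex.ShortExact.moduleCat_exact_iff_function_exact _).1 hS.exact)
      hS.moduleCat_surjective_g

end FinitelyGenerated

section SerreClass

variable {A : Type*} [Category* A] [Abelian A] [EnoughProjectives A]
  {B : Type*} [Category* B] [Abelian B] (F : A ⥤ B) [F.Additive]
  (P : ObjectProperty B) [P.IsSerreClass] (C : ChainComplex A ℕ)

lemma prop_leftDerived_boundaries (p j : ℕ)
    (hterms : ∀ m q, j < m → q + m = p + j + 1 → P ((F.leftDerived q).obj (C.X m)))
    (hhom : ∀ m q, j < m → q + m = p + j → P ((F.leftDerived q).obj (C.homology m))) :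
    P ((F.leftDerived p).obj (boundaries C j)) := by
  induction p generalizing j with
  | zero =>
    exact prop_leftDerived_X₃_of_shortExact F P (shortExact_cycles_X_boundaries C rfl)
      (hterms (j + 1) 0 (by lia) (by lia)) (by simp)
  | succ p ih =>
    have hB : P ((F.leftDerived p).obj (boundaries C (j + 1))) :=
      ih (j + 1) (fun m q _ _ ↦ hterms m q (by lia) (by lia))
        (fun m q _ _ ↦ hhom m q (by lia) (by lia))
    have hZ : P ((F.leftDerived p).obj (C.cycles (j + 1))) :=
      prop_leftDerived_X₂_of_shortExact F P (shortExact_boundaries_cycles_homology C (j + 1))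
        hB (hhom (j + 1) p (by lia) (by lia))
    refine prop_leftDerived_X₃_of_shortExact F P (shortExact_cycles_X_boundaries C rfl)
      (hterms (j + 1) (p + 1) (by lia) (by lia)) fun q hq ↦ ?_
    obtain rfl : q = p := by lia
    exact hZ

theorem homology_zero_homologically_finite_general (p : ℕ)
    (hterms : ∀ j q, q + j = p → P ((F.leftDerived q).obj (C.X j)))
    (hhom : ∀ j q, 0 < j → q + j + 1 = p → P ((F.leftDerived q).obj (C.homology j))) :
    P ((F.leftDerived p).obj (C.homology 0)) := by
  have : IsIso (C.iCycles 0) := C.isIso_iCycles 0 0 (by simp) (by simp)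
  have hZ : P ((F.leftDerived p).obj (C.cycles 0)) :=
    P.prop_of_iso ((F.leftDerived p).mapIso (asIso (C.iCycles 0)).symm) (hterms 0 p rfl)
  refine prop_leftDerived_X₃_of_shortExact F P (shortExact_boundaries_cycles_homology C 0) hZ
    fun q hq ↦ prop_leftDerived_boundaries F P C q 0 ?_ ?_
  · exact fun m r _ _ ↦ hterms m r (by lia)
  · exact fun m r hm _ ↦ hhom m r hm (by lia)

end SerreClass

/-- Let `𝒜` be an abelian category with enough projectives, `F : 𝒜 ⥤ Vect_k` an
additive functor with left derived functors `L_p F`.  Call `X` *homologically finite*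
if `L_p F X` is finite-dimensional for all `p`, and *`i`-homologically finite* if
`L_p F X` is finite-dimensional for all `p ≤ i`.  Let
`C : 0 → C_{n-1} → ⋯ → C_0 → 0` be a bounded chain complex whose terms are all
homologically finite, and suppose `H_j(C)` is `i`-homologically finite for all
`j > 0`.  Then `H_0(C)` is `(i+2)`-homologically finite. -/
theorem homology_zero_homologically_finite
    {k : Type} [Field k]
    {A : Type*} [Category A] [Abelian A] [EnoughProjectives A]
    (F : A ⥤ ModuleCat k) [F.Additive]
    (C : ChainComplex A ℕ) (n : ℕ)
    (hbounded : ∀ j, n ≤ j → IsZero (C.X j))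
    (hterms : ∀ (j p : ℕ), FiniteDimensional k ((F.leftDerived p).obj (C.X j)))
    (i : ℕ)
    (hhom : ∀ j, 0 < j → ∀ p ≤ i,
      FiniteDimensional k ((F.leftDerived p).obj (C.homology j))) :
    ∀ p ≤ i + 2, FiniteDimensional k ((F.leftDerived p).obj (C.homology 0)) :=
  fun p hp ↦ homology_zero_homologically_finite_general F (ModuleCat.isFG k) C p
    (fun j q _ ↦ hterms j q) (fun j q hj _ ↦ hhom j hj q (by lia))
end

section
/- Let k be a field and let ⋯ → C(j+1) → C(j) → ⋯ → C(0) be an inverse sequence, indexed by the natural numbers, of chain complexes of k-vector spaces whose transition maps C(j+1) → C(j) are surjective in every degree. Fix p ≥ 1 and assume that the homology H_p(C(j)) is finite-dimensional over k for every j. Then the natural map H_{p−1}(lim_j C(j)) → lim_j H_{p−1}(C(j)) is an isomorphism, where the inverse limit of the complexes is taken degreewise. -/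
/-!
Everything follows from two facts about towers of modules `F ⟶ G ⟶ H` that are exact in the middle
term at each level. If `F` satisfies the Mittag-Leffler condition, then a compatible family of
elements of `H` lifts to a compatible family of elements of `G` as soon as it lifts levelwise: the
sets of lifts are torsors under quotients of the terms of `F`, hence they form a Mittag-Leffler
tower. If `F` and `H` both satisfy the Mittag-Leffler condition and `G ⟶ H` is levelwise
surjective, then `G` satisfies it too.

Write `X`, `Z`, `H` for the chains, cycles and homology. Lifting along `X_{q+1} ⟶ Z_q ⟶ H_q` turns
a compatible family of classes into a cycle of the limit. Lifting along `Z_{q+1} ⟶ X_{q+1} ⟶ X_q`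
shows that a cycle of the limit is a boundary if it is one at each level; here `Z_{q+1}` is
Mittag-Leffler by the second fact, applied to `X_{q+2} ⟶ Z_{q+1} ⟶ H_{q+1}`.
-/

open CategoryTheory CategoryTheory.Limits Opposite

universe v u

section Types

theorem surjective_map_of_surjective_succ {F : ℕᵒᵖ ⥤ Type v}
    (hF : ∀ n : ℕ, Function.Surjective (F.map (homOfLE n.le_succ).op))
    {i j : ℕᵒᵖ} (f : i ⟶ j) : Function.Surjective (F.map f) := by
  suffices ∀ m n (h : m ≤ n), Function.Surjective (F.map (homOfLE h).op) from
    this j.unop i.unop (leOfHom f.unop)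
  intro m n h
  induction n, h using Nat.le_induction with
  | base => exact fun x => ⟨x, F.map_id_apply _ x⟩
  | succ n h ih =>
    rw [show (homOfLE (h.trans n.le_succ)).op = (homOfLE n.le_succ).op ≫ (homOfLE h).op from rfl,
      F.map_comp, types_comp]
    exact ih.comp (hF n)

theorem nonempty_sections_of_isMittagLeffler {F : ℕᵒᵖ ⥤ Type v} (hF : F.IsMittagLeffler)
    [∀ j, Nonempty (F.obj j)] : F.sections.Nonempty := by
  obtain ⟨x⟩ := F.toEventualRanges_nonempty hF (op 0)
  obtain ⟨y, -⟩ := Types.surjective_π_app_zero_of_surjective_map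
    (limit.isLimit F.toEventualRanges) (fun n => F.surjective_toEventualRanges hF _) x
  exact ⟨_, (F.toEventualRangesSectionsEquiv (Types.limitEquivSections _ y)).2⟩

/-- The subfunctor of `G` whose elements are the levelwise lifts of the section `s` of `H` along
`g`. Its sections are the sections of `G` that lift `s`. -/
def fiberSubfunctor {J : Type*} [Category* J] {G H : J ⥤ Type v} (g : G ⟶ H) (s : H.sections) :
    Subfunctor G where
  obj j := {x | g.app j x = s.1 j}
  map f x hx := by
    change g.app _ (G.map f x) = s.1 _
    rw [NatTrans.naturality_apply, show g.app _ x = s.1 _ from hx, s.2]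

section

variable {J : Type*} [Category* J] {𝒜 : Type*} [Category* 𝒜] {C : J ⥤ 𝒜} [HasLimit C]
  {T : 𝒜 ⥤ Type v} [PreservesLimit C T]

theorem exists_map_limit_π_eq (s : (C ⋙ T).sections) :
    ∃ x : T.obj (limit C), ∀ j, T.map (limit.π C j) x = s.1 j :=
  let t := isLimitOfPreserves T (limit.isLimit C)
  ⟨(Types.isLimitEquivSections t).symm s, Types.isLimitEquivSections_symm_apply t s⟩

theorem eq_of_map_limit_π_eq {x y : T.obj (limit C)}
    (h : ∀ j, T.map (limit.π C j) x = T.map (limit.π C j) y) : x = y :=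
  Concrete.isLimit_ext (C ⋙ T) (isLimitOfPreserves T (limit.isLimit C)) x y h

end

end Types

section Modules

variable {R : Type u} [Ring R] {J : Type*} [Category* J] {F G H : J ⥤ ModuleCat.{v} R}

theorem isMittagLeffler_of_isArtinian [IsCofilteredOrEmpty J] [∀ j, IsArtinian R (F.obj j)] :
    (F ⋙ forget _).IsMittagLeffler := by
  rw [Functor.isMittagLeffler_iff_subset_range_comp]
  intro j
  obtain ⟨_, ⟨⟨i, f⟩, rfl⟩, hmin⟩ := IsArtinian.set_has_minimal
    (Set.range fun a : Σ i, i ⟶ j => LinearMap.range (F.map a.2).hom) ⟨_, ⟨j, 𝟙 j⟩, rfl⟩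
  refine ⟨i, f, fun k g => ?_⟩
  have hle : LinearMap.range (F.map (g ≫ f)).hom ≤ LinearMap.range (F.map f).hom := by
    rw [F.map_comp, ModuleCat.hom_comp]
    exact LinearMap.range_comp_le_range _ _
  exact (eq_of_le_of_not_lt hle (hmin _ ⟨⟨k, g ≫ f⟩, rfl⟩)).ge

variable {f : F ⟶ G} {g : G ⟶ H}

theorem exists_map_eq_of_exact (hfg : ∀ j, Function.Exact (f.app j) (g.app j)) {i j k : J}
    {a : i ⟶ j} {b : k ⟶ i}
    (hF : Set.range ((F ⋙ forget _).map a) ⊆ Set.range ((F ⋙ forget _).map (b ≫ a)))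
    {x : G.obj i} {y : G.obj k} (hxy : g.app i x = g.app i (G.map b y)) :
    ∃ y' : G.obj k, g.app k y' = g.app k y ∧ G.map (b ≫ a) y' = G.map a x := by
  obtain ⟨c, hc⟩ := (hfg i (x - G.map b y)).1 (by rw [map_sub, hxy, sub_self])
  obtain ⟨c', hc' : F.map (b ≫ a) c' = F.map a c⟩ := hF ⟨c, rfl⟩
  refine ⟨y + f.app k c', by rw [map_add, (hfg k).apply_apply_eq_zero, add_zero], ?_⟩
  rw [map_add, ← NatTrans.naturality_apply, hc', NatTrans.naturality_apply, hc, map_sub,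
    G.map_comp, ConcreteCategory.comp_apply]
  abel

theorem isMittagLeffler_of_exact [IsCofilteredOrEmpty J]
    (hfg : ∀ j, Function.Exact (f.app j) (g.app j)) (hg : ∀ j, Function.Surjective (g.app j))
    (hF : (F ⋙ forget _).IsMittagLeffler) (hH : (H ⋙ forget _).IsMittagLeffler) :
    (G ⋙ forget _).IsMittagLeffler := by
  rw [Functor.isMittagLeffler_iff_subset_range_comp] at hF hH ⊢
  intro j
  obtain ⟨i, a, ha⟩ := hF j
  obtain ⟨l, b, hb⟩ := hH i
  refine ⟨l, b ≫ a, fun k c => ?_⟩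
  rintro _ ⟨x, rfl⟩
  obtain ⟨z, hz : H.map (c ≫ b) z = H.map b (g.app l x)⟩ := hb c ⟨g.app l x, rfl⟩
  obtain ⟨y, rfl⟩ := hg k z
  obtain ⟨y', -, hy'⟩ := exists_map_eq_of_exact hfg (ha (c ≫ b)) (x := G.map b x) (y := y)
    (by rw [NatTrans.naturality_apply, NatTrans.naturality_apply, hz])
  refine ⟨y', ?_⟩
  simpa using hy'

theorem exists_section_lift_of_exact {F G H : ℕᵒᵖ ⥤ ModuleCat.{v} R} {f : F ⟶ G} {g : G ⟶ H}
    (hfg : ∀ j, Function.Exact (f.app j) (g.app j)) (hF : (F ⋙ forget _).IsMittagLeffler)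
    (s : (H ⋙ forget _).sections) (hs : ∀ j, ∃ x, g.app j x = s.1 j) :
    ∃ t : (G ⋙ forget _).sections, ∀ j, g.app j (t.1 j) = s.1 j := by
  let E := fiberSubfunctor (Functor.whiskerRight g (forget _)) s
  have hE : E.toFunctor.IsMittagLeffler := by
    rw [Functor.isMittagLeffler_iff_subset_range_comp] at hF ⊢
    intro j
    obtain ⟨i, a, ha⟩ := hF j
    refine ⟨i, a, fun k b => ?_⟩
    rintro _ ⟨x, rfl⟩
    obtain ⟨y, hy⟩ := hs k
    obtain ⟨y', hgy', hy'⟩ := exists_map_eq_of_exact hfg (ha b) (x := x.1) (y := y)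
      (x.2.trans (E.map b hy).symm)
    exact ⟨⟨y', hgy'.trans hy⟩, Subtype.ext hy'⟩
  have (j : ℕᵒᵖ) : Nonempty (E.toFunctor.obj j) := let ⟨x, hx⟩ := hs j; ⟨x, hx⟩
  obtain ⟨t, ht⟩ := nonempty_sections_of_isMittagLeffler hE
  exact ⟨⟨fun j => (t j).1, fun a => congrArg Subtype.val (ht a)⟩, fun j => (t j).2⟩

end Modules

section Complexes

open HomologicalComplex

variable {ι : Type*} {c : ComplexShape ι}

theorem toCycles_comp_cyclesMap {𝒜 : Type*} [Category* 𝒜] [HasZeroMorphisms 𝒜]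
    {K L : HomologicalComplex 𝒜 c} (φ : K ⟶ L) (i j : ι) [K.HasHomology j] [L.HasHomology j] :
    K.toCycles i j ≫ cyclesMap φ j = φ.f i ≫ L.toCycles i j := by
  simp [← cancel_mono (L.iCycles j)]

variable {R : Type u} [Ring R]

section

variable (K : HomologicalComplex (ModuleCat.{v} R) c)

theorem homologyπ_surjective (i : ι) : Function.Surjective (K.homologyπ i) :=
  (ModuleCat.epi_iff_surjective _).1 inferInstance

theorem iCycles_injective (i : ι) : Function.Injective (K.iCycles i) :=
  (ModuleCat.mono_iff_injective _).1 inferInstance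

theorem exact_toCycles_homologyπ {i j : ι} (hi : c.prev j = i) :
    Function.Exact (K.toCycles i j) (K.homologyπ j) :=
  (ShortComplex.ShortExact.moduleCat_exact_iff_function_exact
    (.mk _ _ (K.toCycles_comp_homologyπ i j))).1
    (ShortComplex.exact_of_g_is_cokernel _ (K.homologyIsCokernel i j hi))

theorem exact_iCycles_d {i j : ι} (hj : c.next i = j) :
    Function.Exact (K.iCycles i) (K.d i j) :=
  (ShortComplex.ShortExact.moduleCat_exact_iff_function_exact (.mk _ _ (K.iCycles_d i j))).1
    (ShortComplex.exact_of_f_is_kernel _ (K.cyclesIsKernel i j hj))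

end

section NatTrans

variable (c R)

/-- The map from chains of degree `i` to cycles of degree `j` induced by the differential, as a
natural transformation. -/
noncomputable def toCyclesNatTrans (i j : ι) :
    eval (ModuleCat.{v} R) c i ⟶ cyclesFunctor _ c j where
  app K := K.toCycles i j
  naturality _ _ φ := (toCycles_comp_cyclesMap φ i j).symm

/-- The inclusion of the cycles of degree `i` into the chains, as a natural transformation. -/
noncomputable def iCyclesNatTrans (i : ι) : cyclesFunctor (ModuleCat.{v} R) c i ⟶ eval _ c i where
  app K := K.iCycles i
  naturality _ _ φ := cyclesMap_i φ i

end NatTrans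

section

variable {J : Type*} [Category* J] {C : J ⥤ HomologicalComplex (ModuleCat.{v} R) c}

theorem isMittagLeffler_cycles [IsCofilteredOrEmpty J] {i j : ι} (hi : c.prev j = i)
    (hX : (C ⋙ eval _ c i ⋙ forget _).IsMittagLeffler)
    (hH : (C ⋙ homologyFunctor _ c j ⋙ forget _).IsMittagLeffler) :
    (C ⋙ cyclesFunctor _ c j ⋙ forget _).IsMittagLeffler :=
  isMittagLeffler_of_exact (f := Functor.whiskerLeft C (toCyclesNatTrans c R i j))
    (g := Functor.whiskerLeft C (natTransHomologyπ _ c j))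
    (fun n => exact_toCycles_homologyπ (C.obj n) hi) (fun n => homologyπ_surjective (C.obj n) j)
    hX hH

theorem limit_π_homology_post (j : ι) [HasLimit C] [HasLimit (C ⋙ homologyFunctor _ c j)] (n : J)
    (z : (limit C).cycles j) :
    limit.π (C ⋙ homologyFunctor _ c j) n (limit.post C (homologyFunctor _ c j)
      ((limit C).homologyπ j z)) = (C.obj n).homologyπ j (cyclesMap (limit.π C n) j z) := by
  refine (ConcreteCategory.congr_hom (limit.post_π C (homologyFunctor _ c j) n) _).trans ?_
  exact ConcreteCategory.congr_hom (homologyπ_naturality (limit.π C n) j) z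

variable [∀ i, HasLimit (C ⋙ eval _ c i)] [PreservesLimitsOfShape J (forget (ModuleCat.{v} R))]

theorem limit_X_ext {i : ι} {x y : (limit C).X i}
    (h : ∀ n, (limit.π C n).f i x = (limit.π C n).f i y) : x = y :=
  eq_of_map_limit_π_eq (T := eval _ c i ⋙ CategoryTheory.forget (ModuleCat R)) h

theorem exists_limit_X_of_section {i : ι} (s : (C ⋙ eval _ c i ⋙ forget _).sections) :
    ∃ x : (limit C).X i, ∀ n, (limit.π C n).f i x = s.1 n :=
  exists_map_limit_π_eq s

theorem d_limit_X_eq_iff {i j : ι} {x : (limit C).X i} {y : (limit C).X j} :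
    (limit C).d i j x = y ↔
      ∀ n, (C.obj n).d i j ((limit.π C n).f i x) = (limit.π C n).f j y := by
  have hd (n : J) : (C.obj n).d i j ((limit.π C n).f i x) =
      (limit.π C n).f j ((limit C).d i j x) :=
    ConcreteCategory.congr_hom ((limit.π C n).comm i j) x
  simp only [hd]
  exact ⟨fun h n => congrArg _ h, limit_X_ext⟩

theorem exists_limit_cycles_of_section {i : ι} (s : (C ⋙ cyclesFunctor _ c i ⋙ forget _).sections) :
    ∃ z : (limit C).cycles i, ∀ n, cyclesMap (limit.π C n) i z = s.1 n := by
  obtain ⟨x, hx⟩ := exists_limit_X_of_section ((Functor.sectionsFunctor _).map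
    (Functor.whiskerRight (Functor.whiskerLeft C (iCyclesNatTrans c R i)) (forget _)) s)
  have hdx : (limit C).d i (c.next i) x = 0 := d_limit_X_eq_iff.2 fun n => by
    rw [hx, map_zero]
    exact (exact_iCycles_d _ rfl).apply_apply_eq_zero _
  obtain ⟨z, rfl⟩ := (exact_iCycles_d _ rfl _).1 hdx
  exact ⟨z, fun n => iCycles_injective _ _
    ((ConcreteCategory.congr_hom (cyclesMap_i (limit.π C n) i) z).trans (hx n))⟩

end

section

variable {C : ℕᵒᵖ ⥤ HomologicalComplex (ModuleCat.{v} R) c} {i j : ι}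

theorem exists_limit_d_eq (hj : c.next i = j)
    (hZ : (C ⋙ cyclesFunctor _ c i ⋙ forget _).IsMittagLeffler) {y : (limit C).X j}
    (hy : ∀ n, ∃ x, (C.obj n).d i j x = (limit.π C n).f j y) :
    ∃ x, (limit C).d i j x = y := by
  let s : (C ⋙ eval _ c j ⋙ forget _).sections :=
    ⟨fun n => (limit.π C n).f j y,
      fun a => ConcreteCategory.congr_hom (congr_hom (limit.w C a) j) y⟩
  obtain ⟨t, ht⟩ := exists_section_lift_of_exact
    (f := Functor.whiskerLeft C (iCyclesNatTrans c R i))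
    (g := Functor.whiskerLeft C (dNatTrans _ c i j))
    (fun n => exact_iCycles_d (C.obj n) hj) hZ s hy
  obtain ⟨x, hx⟩ := exists_limit_X_of_section t
  exact ⟨x, d_limit_X_eq_iff.2 fun n => (congrArg _ (hx n)).trans (ht n)⟩

theorem surjective_homology_limit_post (hi : c.prev j = i)
    (hX : (C ⋙ eval _ c i ⋙ forget _).IsMittagLeffler) :
    Function.Surjective (limit.post C (homologyFunctor (ModuleCat.{v} R) c j)) := by
  intro y
  let s : (C ⋙ homologyFunctor _ c j ⋙ forget _).sections :=
    ⟨fun n => limit.π (C ⋙ homologyFunctor _ c j) n y,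
      fun a => ConcreteCategory.congr_hom (limit.w (C ⋙ homologyFunctor _ c j) a) y⟩
  obtain ⟨t, ht⟩ := exists_section_lift_of_exact
    (f := Functor.whiskerLeft C (toCyclesNatTrans c R i j))
    (g := Functor.whiskerLeft C (natTransHomologyπ _ c j))
    (fun n => exact_toCycles_homologyπ (C.obj n) hi) hX s
    (fun n => homologyπ_surjective (C.obj n) j _)
  obtain ⟨z, hz⟩ := exists_limit_cycles_of_section t
  refine ⟨(limit C).homologyπ j z, Concrete.limit_ext _ _ _ fun n => ?_⟩
  rw [limit_π_homology_post, hz]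
  exact ht n

theorem injective_homology_limit_post (hij : c.Rel i j)
    (hZ : (C ⋙ cyclesFunctor _ c i ⋙ forget _).IsMittagLeffler) :
    Function.Injective (limit.post C (homologyFunctor (ModuleCat.{v} R) c j)) := by
  rw [injective_iff_map_eq_zero]
  intro y hy
  obtain ⟨z, rfl⟩ := homologyπ_surjective _ j y
  have hz (n : ℕᵒᵖ) : ∃ x, (C.obj n).d i j x = (limit.π C n).f j ((limit C).iCycles j z) := by
    have hzn : (C.obj n).homologyπ j (cyclesMap (limit.π C n) j z) = 0 := by
      rw [← limit_π_homology_post, hy]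
      exact map_zero _
    obtain ⟨x, hx⟩ := (exact_toCycles_homologyπ _ (c.prev_eq' hij) _).1 hzn
    refine ⟨x, ?_⟩
    rw [← toCycles_i, ConcreteCategory.comp_apply, hx]
    exact ConcreteCategory.congr_hom (cyclesMap_i (limit.π C n) j) z
  obtain ⟨x, hx⟩ := exists_limit_d_eq (c.next_eq' hij) hZ hz
  refine (exact_toCycles_homologyπ _ (c.prev_eq' hij) _).2 ⟨x, iCycles_injective _ _ ?_⟩
  rw [← hx, ← toCycles_i, ConcreteCategory.comp_apply]

theorem homology_limit_iso_of_surjective_of_finite_general (hij : c.Rel i j)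
    (hX : (C ⋙ eval _ c i ⋙ forget _).IsMittagLeffler)
    (hX' : (C ⋙ eval _ c (c.prev i) ⋙ forget _).IsMittagLeffler)
    (hH : (C ⋙ homologyFunctor _ c i ⋙ forget _).IsMittagLeffler) :
    IsIso (limit.post C (homologyFunctor (ModuleCat.{v} R) c j)) :=
  (ConcreteCategory.isIso_iff_bijective _).2
    ⟨injective_homology_limit_post hij (isMittagLeffler_cycles rfl hX' hH),
      surjective_homology_limit_post (c.prev_eq' hij) hX⟩

end

end Complexes

/-- Let `⋯ → C(j+1) → C(j) → ⋯ → C(0)` be an inverse sequence of chain complexes of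
`k`-vector spaces whose transition maps are surjective in every degree.  Fix `p ≥ 1`
and assume that `H_p(C(j))` is finite-dimensional for every `j`.  Then the natural map
`H_{p-1}(lim_j C(j)) → lim_j H_{p-1}(C(j))` (induced by the projections from the
degreewise inverse limit) is an isomorphism. -/
theorem homology_limit_iso_of_surjective_of_finite
    {k : Type} [Field k]
    (C : ℕᵒᵖ ⥤ ChainComplex (ModuleCat k) ℕ)
    (hsurj : ∀ (j n : ℕ),
      Function.Surjective ((C.map (homOfLE (Nat.le_succ j)).op).f n))
    (p : ℕ) (hp : 1 ≤ p)
    (hfin : ∀ j : ℕ, FiniteDimensional k ((C.obj (op j)).homology p)) :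
    IsIso (limit.post C
      (HomologicalComplex.homologyFunctor (ModuleCat k) (ComplexShape.down ℕ) (p - 1))) := by
  have hX (n : ℕ) : (C ⋙ HomologicalComplex.eval _ _ n ⋙ forget _).IsMittagLeffler :=
    Functor.isMittagLeffler_of_surjective _ fun _ _ =>
      surjective_map_of_surjective_succ fun j => hsurj j n
  have (j : ℕᵒᵖ) : IsArtinian k ((C ⋙ HomologicalComplex.homologyFunctor _ _ p).obj j) :=
    have := hfin j.unop
    inferInstanceAs (IsArtinian k ((C.obj j).homology p))
  exact homology_limit_iso_of_surjective_of_finite_general (Nat.sub_add_cancel hp) (hX p) (hX _)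
    (isMittagLeffler_of_isArtinian (F := C ⋙ HomologicalComplex.homologyFunctor _ _ p))
end

section
/- (Borel's lemma for Schwartz functions.) Let n ≥ 1. For every family of real numbers (a_α) indexed by all multi-indices α ∈ ℕⁿ, there exists a Schwartz function φ ∈ 𝒮(ℝⁿ) such that ∂^α φ(0) = a_α for every multi-index α. Equivalently, the Taylor-series-at-the-origin map from 𝒮(ℝⁿ) to the ring of formal power series in n variables is surjective. -/
/-- The partial derivative in the `i`-th coordinate direction of a function on `ℝⁿ`. -/
noncomputable def partialDeriv {n : ℕ} (i : Fin n) (f : (Fin n → ℝ) → ℝ) :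
    (Fin n → ℝ) → ℝ :=
  fun x => fderiv ℝ f x (Pi.single i 1)

/-- The iterated partial derivative `∂^α` associated to a multi-index `α ∈ ℕⁿ`:
`∂^α = ∂₀^{α 0} ∘ ⋯ ∘ ∂_{n-1}^{α (n-1)}`. -/
noncomputable def multiPartialDeriv {n : ℕ} (α : Fin n → ℕ)
    (f : (Fin n → ℝ) → ℝ) : (Fin n → ℝ) → ℝ :=
  (List.finRange n).foldr (fun i g => (partialDeriv i)^[α i] g) f

/-!
Let `P_k` be a smooth `k`-homogeneous function for each `k`, `χ` a bump function equal to `1` near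
the origin and `g_k = χ P_k`. By homogeneity `χ(t x) P_k(x) = t⁻ᵏ g_k(t x)`, whose `j`-th derivative
has size `O(t ^ (j - k))`. So for suitable `t_k` the derivatives of order `< k` of
`χ(t_k x) P_k(x)` are at most `2⁻ᵏ`, and `f(x) = ∑ₖ χ(t_k x) P_k(x)` can be differentiated termwise
to all orders. Near the origin the `k`-th term is `P_k`, and homogeneity forces `Dʲ P_k (0) = 0` for
`j ≠ k`, hence `Dᵏ f(0) = Dᵏ P_k (0)`.

For a formal power series `c`, take the `P_k` to be its homogeneous components: `∂^α` is the
evaluation of the `|α|`-th Fréchet derivative at a fixed tuple of basis vectors, so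
`∂^α f(0) = ∂^α P_{|α|} (0) = α! c_α`.
-/

open Filter Finset Topology
open scoped ContDiff

lemma exists_summable_norm_bound_of_eventually {ι X F : Type*} [Norm F] {g : ι → X → F} {u : ι → ℝ}
    (hu : Summable u) (hbdd : ∀ i, ∃ C, ∀ x, ‖g i x‖ ≤ C)
    (hgu : ∀ᶠ i in cofinite, ∀ x, ‖g i x‖ ≤ u i) :
    ∃ v : ι → ℝ, Summable v ∧ ∀ i x, ‖g i x‖ ≤ v i := by
  classical
  choose C hC using hbdd
  refine ⟨fun i => if ∀ x, ‖g i x‖ ≤ u i then u i else C i, hu.congr_cofinite ?_, fun i x => ?_⟩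
  · filter_upwards [hgu] with i hi
    rw [if_pos hi]
  · dsimp only
    split_ifs with hi
    exacts [hi x, hC i x]

section Borel

variable {E F : Type*} [NormedAddCommGroup E] [NormedSpace ℝ E]
  [NormedAddCommGroup F] [NormedSpace ℝ F]

lemma iteratedFDeriv_apply_zero_eq_zero_of_homogeneous {P : E → F} {j k : ℕ} (hP : ContDiff ℝ j P)
    (hhom : ∀ (t : ℝ) x, P (t • x) = t ^ k • P x) (hjk : j ≠ k) : iteratedFDeriv ℝ j P 0 = 0 := by
  have hscale : (2 : ℝ) ^ k • iteratedFDeriv ℝ j P 0 = (2 : ℝ) ^ j • iteratedFDeriv ℝ j P 0 := by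
    have h := congrFun (iteratedFDeriv_comp_const_smul (2 : ℝ) hP) 0
    rwa [funext (hhom 2), iteratedFDeriv_const_smul_apply' hP.contDiffAt, smul_zero] at h
  have hpow : (2 : ℝ) ^ k - 2 ^ j ≠ 0 :=
    sub_ne_zero.2 fun h => hjk (pow_right_injective₀ two_pos (by norm_num) h).symm
  exact (smul_eq_zero.1 (by rw [sub_smul, hscale, sub_self])).resolve_left hpow

lemma eventually_norm_iteratedFDeriv_rescale_le {g : E → F} {j k : ℕ} (hg : ContDiff ℝ j g) {C : ℝ}
    (hC : ∀ x, ‖iteratedFDeriv ℝ j g x‖ ≤ C) (hjk : j < k) {ε : ℝ} (hε : 0 < ε) :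
    ∀ᶠ t : ℝ in atTop, ∀ x, ‖iteratedFDeriv ℝ j (fun y => (t ^ k)⁻¹ • g (t • y)) x‖ ≤ ε := by
  have hlim : Tendsto (fun t : ℝ => t ^ j / t ^ k * C) atTop (𝓝 0) := by
    simpa using (tendsto_pow_div_pow_atTop_zero (𝕜 := ℝ) hjk).mul_const C
  filter_upwards [hlim.eventually_le_const hε, eventually_gt_atTop 0] with t htε ht x
  have hcomp : ContDiff ℝ j fun y => g (t • y) := hg.comp (contDiff_const_smul t)
  calc ‖iteratedFDeriv ℝ j (fun y => (t ^ k)⁻¹ • g (t • y)) x‖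
      = t ^ j / t ^ k * ‖iteratedFDeriv ℝ j g (t • x)‖ := by
        rw [iteratedFDeriv_const_smul_apply' hcomp.contDiffAt, iteratedFDeriv_comp_const_smul t hg,
          smul_smul, norm_smul, Real.norm_of_nonneg (by positivity), inv_mul_eq_div]
    _ ≤ t ^ j / t ^ k * C := by gcongr; exact hC _
    _ ≤ ε := htε

lemma exists_norm_iteratedFDeriv_le_of_hasCompactSupport {f : E → F} {j : ℕ}
    (hfc : HasCompactSupport f) (hf : ContDiff ℝ j f) :
    ∃ C, ∀ x, ‖iteratedFDeriv ℝ j f x‖ ≤ C :=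
  hf.continuous_iteratedFDeriv'.bounded_above_of_compact_support (hfc.iteratedFDeriv j)

lemma bump_comp_smul_smul_eventuallyEq [HasContDiffBump E] (χ : ContDiffBump (0 : E)) (t : ℝ)
    (P : E → F) : (fun x => χ (t • x) • P x) =ᶠ[𝓝 0] P := by
  have hlim : Tendsto (fun x : E => t • x) (𝓝 0) (𝓝 0) := by
    simpa using (continuous_const_smul t).tendsto (0 : E)
  filter_upwards [hlim.eventually χ.eventuallyEq_one] with x hx
  simp [hx]

lemma support_bump_comp_smul_smul_subset [HasContDiffBump E] (χ : ContDiffBump (0 : E)) {t : ℝ}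
    (ht : 1 ≤ t) (P : E → F) :
    Function.support (fun x => χ (t • x) • P x) ⊆ Metric.closedBall 0 χ.rOut := by
  intro x hx
  have hmem : t • x ∈ Metric.ball (0 : E) χ.rOut := by
    rw [← χ.support_eq]
    exact left_ne_zero_of_smul hx
  rw [mem_ball_zero_iff, norm_smul, Real.norm_of_nonneg (by linarith)] at hmem
  exact mem_closedBall_zero_iff.2 ((le_mul_of_one_le_left (norm_nonneg x) ht).trans hmem.le)

lemma exists_norm_iteratedFDeriv_bump_comp_smul_smul_le [FiniteDimensional ℝ E]
    (χ : ContDiffBump (0 : E)) {P : E → F} {k : ℕ} (hP : ContDiff ℝ ∞ P)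
    (hhom : ∀ (t : ℝ) x, P (t • x) = t ^ k • P x) {ε : ℝ} (hε : 0 < ε) :
    ∃ t : ℝ, 1 ≤ t ∧ ∀ j < k, ∀ x, ‖iteratedFDeriv ℝ j (fun y => χ (t • y) • P y) x‖ ≤ ε := by
  have hg (j : ℕ) : ContDiff ℝ j fun x => χ x • P x :=
    (χ.contDiff.smul hP).of_le (mod_cast le_top)
  have hsmall : ∀ᶠ t : ℝ in atTop, ∀ j ∈ range k, ∀ x,
      ‖iteratedFDeriv ℝ j (fun y => (t ^ k)⁻¹ • (χ (t • y) • P (t • y))) x‖ ≤ ε := by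
    refine (eventually_all_finset _).2 fun j hj => ?_
    obtain ⟨C, hC⟩ := exists_norm_iteratedFDeriv_le_of_hasCompactSupport
      (χ.hasCompactSupport.smul_right (f' := P)) (hg j)
    exact eventually_norm_iteratedFDeriv_rescale_le (hg j) hC (mem_range.1 hj) hε
  obtain ⟨t, ht, ht1⟩ := (hsmall.and (eventually_ge_atTop 1)).exists
  have hrescale : (fun y => (t ^ k)⁻¹ • (χ (t • y) • P (t • y))) = fun y => χ (t • y) • P y := by
    funext y
    rw [hhom, smul_comm, inv_smul_smul₀ (by positivity)]
  exact ⟨t, ht1, fun j hj => hrescale ▸ ht j (mem_range.2 hj)⟩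

theorem exists_contDiff_hasCompactSupport_iteratedFDeriv_apply_zero_eq [FiniteDimensional ℝ E]
    [CompleteSpace F] {P : ℕ → E → F} (hP : ∀ k, ContDiff ℝ ∞ (P k))
    (hhom : ∀ k (t : ℝ) x, P k (t • x) = t ^ k • P k x) :
    ∃ f : E → F, ContDiff ℝ ∞ f ∧ HasCompactSupport f ∧
      ∀ k, iteratedFDeriv ℝ k f 0 = iteratedFDeriv ℝ k (P k) 0 := by
  let χ : ContDiffBump (0 : E) := default
  choose t ht hsmall using fun k =>
    exists_norm_iteratedFDeriv_bump_comp_smul_smul_le χ (hP k) (hhom k) (ε := (1 / 2) ^ k)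
      (by positivity)
  let f (k : ℕ) (x : E) : F := χ (t k • x) • P k x
  have hf (k) : ContDiff ℝ ∞ (f k) := (χ.contDiff.comp (contDiff_const_smul (t k))).smul (hP k)
  have hsupp (k) : Function.support (f k) ⊆ Metric.closedBall 0 χ.rOut :=
    support_bump_comp_smul_smul_subset χ (ht k) (P k)
  have hcompact {h : E → F} (hh : Function.support h ⊆ Metric.closedBall 0 χ.rOut) :
      HasCompactSupport h := .of_support_subset_isCompact (isCompact_closedBall 0 χ.rOut) hh
  have hbdd (j k) : ∃ C, ∀ x, ‖iteratedFDeriv ℝ j (f k) x‖ ≤ C :=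
    exists_norm_iteratedFDeriv_le_of_hasCompactSupport (hcompact (hsupp k))
      ((hf k).of_le (mod_cast le_top))
  have hgeom (j) : ∀ᶠ k in cofinite, ∀ x, ‖iteratedFDeriv ℝ j (f k) x‖ ≤ (1 / 2 : ℝ) ^ k := by
    rw [Nat.cofinite_eq_atTop]
    filter_upwards [eventually_gt_atTop j] with k hk using hsmall k j hk
  choose v hv hfv using fun j =>
    exists_summable_norm_bound_of_eventually summable_geometric_two (hbdd j) (hgeom j)
  refine ⟨fun x => ∑' k, f k x, contDiff_tsum hf (fun j _ => hv j) fun j k x _ => hfv j k x,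
    hcompact fun x hx => ?_, fun j => ?_⟩
  · obtain ⟨k, hk⟩ : ∃ k, f k x ≠ 0 := by
      by_contra! h
      exact hx (by simp [h])
    exact hsupp k hk
  · have hlocal (k) : iteratedFDeriv ℝ j (f k) 0 = iteratedFDeriv ℝ j (P k) 0 :=
      ((bump_comp_smul_smul_eventuallyEq χ (t k) (P k)).iteratedFDeriv ℝ j).eq_of_nhds
    rw [iteratedFDeriv_tsum_apply hf (fun j _ => hv j) (fun j k x _ => hfv j k x) le_top,
      tsum_congr hlocal]
    exact tsum_eq_single j fun k hk => iteratedFDeriv_apply_zero_eq_zero_of_homogeneous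
      ((hP k).of_le (mod_cast le_top)) (hhom k) hk.symm

end Borel

section Polynomial

open MvPolynomial

variable {σ : Type*}

lemma eval_smul_of_isHomogeneous {R : Type*} [CommSemiring R] {p : MvPolynomial σ R} {k : ℕ}
    (hp : p.IsHomogeneous k) (t : R) (x : σ → R) : eval (t • x) p = t ^ k * eval x p := by
  simp only [eval_eq, mul_sum]
  refine sum_congr rfl fun m hm => ?_
  have hdeg : ∑ i ∈ m.support, m i = k := by
    rw [← Finsupp.degree_apply, Finsupp.degree_eq_weight_one]
    exact hp (mem_support_iff.1 hm)
  simp only [Pi.smul_apply, smul_eq_mul, mul_pow, prod_mul_distrib, prod_pow_eq_pow_sum, hdeg]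
  ring

variable [Fintype σ]

lemma hasFDerivAt_eval {𝕜 : Type*} [NontriviallyNormedField 𝕜] (p : MvPolynomial σ 𝕜) (x : σ → 𝕜) :
    HasFDerivAt (fun y => eval y p)
      (∑ i, eval x (pderiv i p) • (ContinuousLinearMap.proj i : (σ → 𝕜) →L[𝕜] 𝕜)) x := by
  classical
  induction p using MvPolynomial.induction_on with
  | C c =>
    simp only [eval_C]
    refine (hasFDerivAt_const c x).congr_fderiv ?_
    ext v
    simp
  | add p q hp hq =>
    simp only [map_add]
    refine (hp.fun_add hq).congr_fderiv ?_
    ext v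
    simp [add_mul, sum_add_distrib]
  | mul_X p j hp =>
    simp only [map_mul, eval_X]
    refine (hp.fun_mul (hasFDerivAt_apply j x)).congr_fderiv ?_
    ext v
    simp [pderiv_X, Pi.single_apply, apply_ite (eval x), ite_mul, add_mul, sum_add_distrib, mul_sum,
      mul_assoc]

/-- The factorial `α! = ∏ i, (α i)!` of a multi-index. -/
def multiIndexFactorial (α : σ → ℕ) : ℕ := ∏ i, (α i).factorial

lemma multiIndexFactorial_ne_zero (α : σ → ℕ) : multiIndexFactorial α ≠ 0 :=
  prod_ne_zero_iff.2 fun i _ => (α i).factorial_ne_zero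

lemma multiIndexFactorial_add_single [DecidableEq σ] (α : σ → ℕ) (i : σ) :
    multiIndexFactorial (α + Pi.single i 1) = (α i + 1) * multiIndexFactorial α := by
  rw [multiIndexFactorial, multiIndexFactorial, ← mul_prod_erase univ _ (mem_univ i),
    ← mul_prod_erase univ (fun j => (α j).factorial) (mem_univ i), ← mul_assoc]
  congr 1
  · simp [Nat.factorial_succ]
  · exact prod_congr rfl fun j hj => by simp [ne_of_mem_erase hj]

/-- With the normalization `m! * coeff m p`, taking a partial derivative only shifts `m`. -/
lemma multiIndexFactorial_mul_coeff_pderiv {R : Type*} [CommSemiring R] (i : σ)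
    (p : MvPolynomial σ R) (m : σ →₀ ℕ) :
    multiIndexFactorial m * coeff m (pderiv i p) =
      multiIndexFactorial (m + Finsupp.single i 1 : σ →₀ ℕ) * coeff (m + Finsupp.single i 1) p := by
  classical
  rw [coeff_pderiv, Finsupp.coe_add, Finsupp.single_eq_pi_single, multiIndexFactorial_add_single]
  push_cast
  ring

lemma multiIndexFactorial_mul_coeff_foldr_pderiv {R : Type*} [CommSemiring R] (L : List σ)
    (p : MvPolynomial σ R) (m : σ →₀ ℕ) :
    multiIndexFactorial m * coeff m (L.foldr (fun i q => pderiv i q) p) =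
      multiIndexFactorial (m + (L.map (Finsupp.single · 1)).sum : σ →₀ ℕ) *
        coeff (m + (L.map (Finsupp.single · 1)).sum) p := by
  induction L generalizing m with
  | nil => simp
  | cons i L ih =>
    rw [List.foldr_cons, multiIndexFactorial_mul_coeff_pderiv, ih, List.map_cons, List.sum_cons,
      add_assoc]

end Polynomial

section MultiIndex

variable {n : ℕ}

/-- The coordinate directions in which `∂^α` differentiates, with multiplicity:
the word `0 ⋯ 0 1 ⋯ 1 ⋯` in which the letter `i` occurs `α i` times. It turns `∂^α` into a
composition of first-order derivatives along a single list. -/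
def directions (α : Fin n → ℕ) : List (Fin n) :=
  (List.finRange n).flatMap fun i => List.replicate (α i) i

lemma length_directions (α : Fin n → ℕ) : (directions α).length = ∑ i, α i := by
  simp [directions, List.length_flatMap, ← List.ofFn_eq_map, List.sum_ofFn]

lemma sum_map_single_directions (α : Fin n → ℕ) :
    ((directions α).map (Finsupp.single · 1)).sum = Finsupp.equivFunOnFinite.symm α := by
  ext j
  simp [directions, List.flatMap_def, List.sum_flatten, List.map_flatten, ← List.ofFn_eq_map,
    List.sum_ofFn, Function.comp_def, Finsupp.single_apply]

lemma multiPartialDeriv_eq_foldr_directions (α : Fin n → ℕ) (f : (Fin n → ℝ) → ℝ) :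
    multiPartialDeriv α f = (directions α).foldr partialDeriv f := by
  have hreplicate (i : Fin n) (k : ℕ) (g : (Fin n → ℝ) → ℝ) :
      (List.replicate k i).foldr partialDeriv g = (partialDeriv i)^[k] g := by
    induction k with
    | zero => rfl
    | succ k ih => rw [List.replicate_succ, List.foldr_cons, ih, Function.iterate_succ_apply']
  simp only [multiPartialDeriv, directions, List.foldr_flatMap, hreplicate]

lemma foldr_partialDeriv_eq_iteratedFDeriv (L : List (Fin n)) {f : (Fin n → ℝ) → ℝ}
    (hf : ContDiff ℝ L.length f) :
    L.foldr partialDeriv f =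
      fun x => iteratedFDeriv ℝ L.length f x fun j => Pi.single (L.get j) 1 := by
  induction L with
  | nil => simp
  | cons i L ih =>
    funext x
    have hdiff : DifferentiableAt ℝ (iteratedFDeriv ℝ L.length f) x :=
      hf.differentiable_iteratedFDeriv (mod_cast Nat.lt_succ_self L.length) x
    rw [List.foldr_cons, ih (hf.of_le (by simp)), partialDeriv,
      (hdiff.hasFDerivAt.continuousMultilinear_apply_const _).fderiv]
    rfl

lemma multiPartialDeriv_congr_of_iteratedFDeriv_eq {α : Fin n → ℕ} {f g : (Fin n → ℝ) → ℝ}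
    (hf : ContDiff ℝ (∑ i, α i : ℕ) f) (hg : ContDiff ℝ (∑ i, α i : ℕ) g) {x : Fin n → ℝ}
    (h : iteratedFDeriv ℝ (∑ i, α i) f x = iteratedFDeriv ℝ (∑ i, α i) g x) :
    multiPartialDeriv α f x = multiPartialDeriv α g x := by
  rw [← length_directions] at hf hg h
  simp only [multiPartialDeriv_eq_foldr_directions, foldr_partialDeriv_eq_iteratedFDeriv _ hf,
    foldr_partialDeriv_eq_iteratedFDeriv _ hg, h]

lemma partialDeriv_eval (i : Fin n) (p : MvPolynomial (Fin n) ℝ) :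
    partialDeriv i (fun x => p.eval x) = fun x => (MvPolynomial.pderiv i p).eval x := by
  funext x
  simp [partialDeriv, (hasFDerivAt_eval p x).fderiv, Pi.single_apply]

lemma foldr_partialDeriv_eval (L : List (Fin n)) (p : MvPolynomial (Fin n) ℝ) :
    L.foldr partialDeriv (fun x => MvPolynomial.eval x p) =
      fun x => MvPolynomial.eval x (L.foldr (fun i q => MvPolynomial.pderiv i q) p) := by
  induction L with
  | nil => rfl
  | cons i L ih => rw [List.foldr_cons, ih, partialDeriv_eval, List.foldr_cons]

lemma multiPartialDeriv_eval_apply_zero (α : Fin n → ℕ) (p : MvPolynomial (Fin n) ℝ) :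
    multiPartialDeriv α (fun x => MvPolynomial.eval x p) 0 =
      multiIndexFactorial α * p.coeff (Finsupp.equivFunOnFinite.symm α) := by
  have h := multiIndexFactorial_mul_coeff_foldr_pderiv (directions α) p 0
  rw [multiPartialDeriv_eq_foldr_directions, foldr_partialDeriv_eval]
  simpa [sum_map_single_directions, MvPolynomial.constantCoeff_eq, multiIndexFactorial] using h

end MultiIndex

theorem borel_lemma_schwartz_general (n : ℕ) (a : (Fin n → ℕ) → ℝ) :
    ∃ φ : SchwartzMap (Fin n → ℝ) ℝ, HasCompactSupport φ ∧
      ∀ α : Fin n → ℕ, multiPartialDeriv α (⇑φ) 0 = a α := by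
  let c : MvPowerSeries (Fin n) ℝ := fun m => a m / multiIndexFactorial m
  let p (k : ℕ) : MvPolynomial (Fin n) ℝ :=
    MvPolynomial.homogeneousComponent k (c.truncTotal (k + 1))
  have hp (k) : ContDiff ℝ ∞ fun x => (p k).eval x :=
    (AnalyticOnNhd.eval_mvPolynomial (p k)).contDiff
  obtain ⟨f, hf, hfc, hfp⟩ :=
    exists_contDiff_hasCompactSupport_iteratedFDeriv_apply_zero_eq hp fun k =>
      eval_smul_of_isHomogeneous (MvPolynomial.homogeneousComponent_isHomogeneous k _)
  refine ⟨hfc.toSchwartzMap hf, hfc, fun α => ?_⟩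
  have hcoeff : (p (∑ i, α i)).coeff (Finsupp.equivFunOnFinite.symm α) =
      a α / multiIndexFactorial α := by
    rw [MvPolynomial.coeff_homogeneousComponent, if_pos (by simp [Finsupp.degree_eq_sum]),
      MvPowerSeries.coeff_truncTotal _ (by simp [Finsupp.degree_eq_sum])]
    rfl
  calc multiPartialDeriv α f 0
      = multiPartialDeriv α (fun x => (p (∑ i, α i)).eval x) 0 :=
        multiPartialDeriv_congr_of_iteratedFDeriv_eq (hf.of_le (mod_cast le_top))
          ((hp _).of_le (mod_cast le_top)) (hfp _)
    _ = multiIndexFactorial α * (a α / multiIndexFactorial α) := by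
        rw [multiPartialDeriv_eval_apply_zero, hcoeff]
    _ = a α := mul_div_cancel₀ _ (Nat.cast_ne_zero.2 (multiIndexFactorial_ne_zero α))

/-- **Borel's lemma for Schwartz functions.**  For every family of real numbers
`(a_α)` indexed by multi-indices `α ∈ ℕⁿ` there exists a Schwartz function
`φ ∈ 𝒮(ℝⁿ)` with `∂^α φ (0) = a_α` for every `α`; i.e. the Taylor series map at
the origin from `𝒮(ℝⁿ)` to formal power series in `n` variables is surjective. -/
theorem borel_lemma_schwartz (n : ℕ) (hn : 1 ≤ n) (a : (Fin n → ℕ) → ℝ) :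
    ∃ φ : SchwartzMap (Fin n → ℝ) ℝ,
      ∀ α : Fin n → ℕ, multiPartialDeriv α (⇑φ) 0 = a α := by
  obtain ⟨φ, -, hφ⟩ := borel_lemma_schwartz_general n a
  exact ⟨φ, hφ⟩
end

section
/- Let n ≥ 1 and let f ∈ 𝒮(ℝⁿ) be a Schwartz function. Then ∫_{ℝⁿ} f(x) dx = 0 if and only if there exist Schwartz functions g₁, …, g_n ∈ 𝒮(ℝⁿ) such that f = ∂₁g₁ + ⋯ + ∂_n g_n. Consequently, the subspace {∂₁g₁ + ⋯ + ∂_n g_n : g₁,…,g_n ∈ 𝒮(ℝⁿ)} of 𝒮(ℝⁿ) is closed and of codimension one; i.e., the zeroth Lie algebra homology of 𝒮(ℝⁿ) under the translation action of ℝⁿ is separated and one-dimensional. -/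
/-!
If `f` is Schwartz with `∫ f = 0`, then `𝓕 f` vanishes at the origin, and since `𝓕` turns
derivatives into multiplication by coordinates it suffices to write `F = 𝓕 f` as `∑ ξᵢ Gᵢ` with
Schwartz `Gᵢ`. Hadamard's lemma gives `F ξ = A ξ ξ` with `A` smooth, but without decay; away from
the origin `F = ∑ ξᵢ (ξᵢ F / |ξ|²)` is fine. To glue the two, take `m` of temperate growth, equal to
`|ξ|⁻²` for `|ξ| ≥ 1`. Then `ρ = 1 - |ξ|² m` is smooth with compact support, and
`F = |ξ|² m F + ρ F` gives `Gᵢ ξ = ξᵢ m(ξ) F(ξ) + ρ(ξ) A ξ eᵢ`.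

Hence the sums of derivatives are the kernel of the nonzero continuous functional `∫`, a closed
subspace of codimension one.
-/

open MeasureTheory

/-- The subspace `{∂₁g₁ + ⋯ + ∂_n g_n : gᵢ ∈ 𝒮(ℝⁿ)}` of `𝒮(ℝⁿ)`, i.e. the span of
the images of the partial-derivative operators (the augmentation ideal of the
translation action of the abelian Lie algebra `ℝⁿ`). -/
noncomputable def schwartzDerivSpan (n : ℕ) :
    Submodule ℝ (SchwartzMap (Fin n → ℝ) ℝ) :=
  Submodule.span ℝ {h : SchwartzMap (Fin n → ℝ) ℝ |
    ∃ (g : SchwartzMap (Fin n → ℝ) ℝ) (i : Fin n),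
      ∀ x, h x = fderiv ℝ g x (Pi.single i 1)}

open Set Filter Topology
open scoped SchwartzMap ContDiff FourierTransform LineDeriv
open SchwartzMap Module

section ParametricIntegral

theorem contDiff_fderiv_left {𝕜 E F G : Type*} [NontriviallyNormedField 𝕜]
    [NormedAddCommGroup E] [NormedSpace 𝕜 E] [NormedAddCommGroup F] [NormedSpace 𝕜 F]
    [NormedAddCommGroup G] [NormedSpace 𝕜 G] {m n : WithTop ℕ∞} {f : E → G → F}
    (hf : ContDiff 𝕜 n (Function.uncurry f)) (hmn : m + 1 ≤ n) :
    ContDiff 𝕜 m fun p : E × G => fderiv 𝕜 (f · p.2) p.1 :=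
  ContDiff.fderiv (f := fun (p : E × G) (x : E) => f x p.2)
    (hf.comp (contDiff_snd.prodMk (contDiff_snd.comp contDiff_fst))) contDiff_fst hmn

variable {E F : Type*} [NormedAddCommGroup E] [NormedSpace ℝ E] [NormedAddCommGroup F]
  [NormedSpace ℝ F]

theorem hasFDerivAt_intervalIntegral_of_contDiff {f : E → ℝ → F}
    (hf : ContDiff ℝ 1 (Function.uncurry f)) (a b : ℝ) (x₀ : E) :
    HasFDerivAt (fun x => ∫ t in a..b, f x t) (∫ t in a..b, fderiv ℝ (f · t) x₀) x₀ := by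
  have continuous_left (x : E) : Continuous (f x) := by
    have := hf.continuous
    fun_prop
  have continuous_fderiv : Continuous fun p : E × ℝ => fderiv ℝ (f · p.2) p.1 :=
    (contDiff_fderiv_left (m := 0) hf (by simp)).continuous
  have differentiable (t : ℝ) : Differentiable ℝ (f · t) :=
    (hf.comp (contDiff_id.prodMk contDiff_const)).differentiable one_ne_zero
  have continuous_fderiv_right : Continuous fun t => fderiv ℝ (f · t) x₀ :=
    continuous_fderiv.comp (Continuous.prodMk_right x₀)
  obtain ⟨C, hC⟩ := isCompact_uIcc.exists_bound_of_continuousOn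
    (s := uIcc a b) continuous_fderiv_right.continuousOn
  have eventually_bound : ∀ᶠ x in 𝓝 x₀, ∀ t ∈ uIcc a b, ‖fderiv ℝ (f · t) x‖ < C + 1 :=
    isCompact_uIcc.eventually_forall_of_forall_eventually fun t ht =>
      continuous_fderiv.norm.continuousAt.eventually_lt_const (by linarith [hC t ht])
  exact intervalIntegral.hasFDerivAt_integral_of_dominated_of_fderiv_le (𝕜 := ℝ)
    (F' := fun x t => fderiv ℝ (f · t) x) (bound := fun _ => C + 1) eventually_bound
    (.of_forall fun x => (continuous_left x).aestronglyMeasurable)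
    ((continuous_left x₀).intervalIntegrable a b)
    continuous_fderiv_right.aestronglyMeasurable
    (.of_forall fun t ht x hx => (hx t (uIoc_subset_uIcc ht)).le)
    intervalIntegrable_const
    (.of_forall fun t _ x _ => (differentiable t x).hasFDerivAt)

theorem contDiff_intervalIntegral [FiniteDimensional ℝ E] [CompleteSpace F] {n : ℕ∞}
    {f : E → ℝ → F} (hf : ContDiff ℝ n (Function.uncurry f)) (a b : ℝ) :
    ContDiff ℝ n fun x => ∫ t in a..b, f x t := by
  suffices contDiff_nat : ∀ (k : ℕ) (f : E → ℝ → F), ContDiff ℝ k (Function.uncurry f) →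
      ContDiff ℝ k fun x => ∫ t in a..b, f x t from
    contDiff_iff_forall_nat_le.2 fun k hk => contDiff_nat k f (hf.of_le (mod_cast hk))
  intro k
  induction k with
  | zero =>
    intro f hf
    rw [Nat.cast_zero, contDiff_zero] at hf ⊢
    exact intervalIntegral.continuous_parametric_intervalIntegral_of_continuous' hf a b
  | succ k ih =>
    intro f hf
    have hasFDerivAt := hasFDerivAt_intervalIntegral_of_contDiff (f := f) (hf.of_le (by simp)) a b
    have contDiff_fderiv : ContDiff ℝ k fun p : E × ℝ => fderiv ℝ (f · p.2) p.1 :=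
      contDiff_fderiv_left hf (mod_cast le_rfl)
    push_cast
    -- Inducting on directional derivatives rather than on `fderiv` keeps the codomain `F` fixed.
    refine contDiff_succ_iff_fderiv_apply.2
      ⟨fun x => (hasFDerivAt x).differentiableAt, by simp, fun y => ?_⟩
    have integrable (x : E) :
        IntervalIntegrable (fun t => fderiv ℝ (f · t) x) volume a b :=
      (contDiff_fderiv.continuous.comp (Continuous.prodMk_right x)).intervalIntegrable a b
    simp only [(hasFDerivAt _).fderiv, ContinuousLinearMap.intervalIntegral_apply (integrable _)]
    exact ih (fun x t => fderiv ℝ (f · t) x y) (contDiff_fderiv.clm_apply contDiff_const)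

/-- Hadamard's lemma, with `A x` the mean of `fderiv ℝ f` over the segment from `0` to `x`. -/
theorem exists_contDiff_eq_add_apply_self [FiniteDimensional ℝ E] [CompleteSpace F] {n : ℕ∞}
    {f : E → F} (hf : ContDiff ℝ (n + 1) f) :
    ∃ A : E → E →L[ℝ] F, ContDiff ℝ n A ∧ ∀ x, f x = f 0 + A x x := by
  have contDiff_fderiv : ContDiff ℝ n (fderiv ℝ f) := hf.fderiv_right le_rfl
  refine ⟨fun x => ∫ t in (0 : ℝ)..1, fderiv ℝ f (t • x), contDiff_intervalIntegral
    (contDiff_fderiv.comp (contDiff_snd.smul contDiff_fst)) 0 1, fun x => ?_⟩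
  have continuous_fderiv : Continuous fun t : ℝ => fderiv ℝ f (t • x) :=
    contDiff_fderiv.continuous.comp (by fun_prop)
  have hasDerivAt (t : ℝ) : HasDerivAt (fun t : ℝ => f (t • x)) (fderiv ℝ f (t • x) x) t :=
    ((hf.differentiable (by simp)) (t • x)).hasFDerivAt.comp_hasDerivAt t
      (by simpa using (hasDerivAt_id t).smul_const x)
  rw [ContinuousLinearMap.intervalIntegral_apply (continuous_fderiv.intervalIntegrable 0 1),
    intervalIntegral.integral_eq_sub_of_hasDerivAt (fun t _ => hasDerivAt t)
      ((continuous_fderiv.clm_apply continuous_const).intervalIntegrable 0 1)]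
  simp

end ParametricIntegral

section Cutoff

theorem exists_contDiff_hasCompactSupport_eqOn {E F : Type*} [NormedAddCommGroup E]
    [NormedSpace ℝ E] [FiniteDimensional ℝ E] [NormedAddCommGroup F] [NormedSpace ℝ F] {n : ℕ∞}
    {f : E → F} {K U : Set E} (hK : IsCompact K) (hU : IsOpen U) (hKU : K ⊆ U)
    (hf : ContDiffOn ℝ n f U) :
    ∃ g : E → F, ContDiff ℝ n g ∧ HasCompactSupport g ∧ EqOn g f K := by
  obtain ⟨L, hL, hKL, hLU⟩ := exists_compact_between hK hU hKU
  obtain ⟨χ, χ_zero, χ_one, -⟩ := exists_contMDiffMap_zero_one_of_isClosed (n := n)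
    (modelWithCornersSelf ℝ E) isOpen_interior.isClosed_compl hK.isClosed
    (disjoint_compl_left_iff_subset.2 hKL)
  have tsupport_subset : tsupport χ ⊆ L := closure_minimal
    (fun x hx => interior_subset (by_contra fun hxL => hx (χ_zero hxL))) hL.isClosed
  have χ_compact : HasCompactSupport χ :=
    hL.of_isClosed_subset (isClosed_tsupport χ) tsupport_subset
  refine ⟨fun x => χ x • f x, contDiff_iff_contDiffAt.2 fun x => ?_,
    χ_compact.smul_right, fun x hx => by simp [χ_one hx]⟩
  by_cases hx : x ∈ U
  · exact χ.contMDiff.contDiff.contDiffAt.smul (hf.contDiffAt (hU.mem_nhds hx))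
  · have χ_eventually_zero := notMem_tsupport_iff_eventuallyEq.1
      fun hx_mem => hx (hLU (tsupport_subset hx_mem))
    refine (contDiffAt_const (c := 0)).congr_of_eventuallyEq ?_
    filter_upwards [χ_eventually_zero] with y hy using by simp [hy]

variable (V : Type*) [NormedAddCommGroup V] [InnerProductSpace ℝ V]

theorem exists_hasTemperateGrowth_eq_inv_norm_sq {r : ℝ} (hr : 0 < r) :
    ∃ m : V → ℝ, m.HasTemperateGrowth ∧ ∀ x, r ≤ ‖x‖ → m x = (‖x‖ ^ 2)⁻¹ := by
  -- In terms of `u = (1 + ‖x‖²)⁻¹`, which has temperate growth, `‖x‖⁻²` is `u / (1 - u)`, and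
  -- `‖x‖ ≥ r` keeps `u` away from the pole.
  have contDiffOn_div : ContDiffOn ℝ ∞ (fun u : ℝ => u / (1 - u)) (Iio 1) :=
    contDiffOn_id.div (contDiffOn_const.sub contDiffOn_id) fun u hu => (sub_pos.2 hu).ne'
  have inv_lt_one : (1 + r ^ 2)⁻¹ < 1 :=
    inv_lt_one_of_one_lt₀ (lt_add_of_pos_right 1 (by positivity))
  obtain ⟨θ, θ_contDiff, θ_compact, hθ⟩ := exists_contDiff_hasCompactSupport_eqOn
    (isCompact_Icc (a := 0) (b := (1 + r ^ 2)⁻¹)) isOpen_Iio (fun u hu => hu.2.trans_lt inv_lt_one)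
    contDiffOn_div
  refine ⟨fun x => θ ((1 + ‖x‖ ^ 2) ^ (-1 : ℝ)), (θ_compact.hasTemperateGrowth θ_contDiff).comp
    (Function.hasTemperateGrowth_one_add_norm_sq_rpow V (-1)), fun x hx => ?_⟩
  have norm_pos : 0 < ‖x‖ := hr.trans_le hx
  have mem_Icc : (1 + ‖x‖ ^ 2)⁻¹ ∈ Icc 0 (1 + r ^ 2)⁻¹ := ⟨by positivity, by gcongr⟩
  simp only [Real.rpow_neg_one, hθ mem_Icc]
  field_simp
  ring

theorem exists_norm_sq_mul_hasTemperateGrowth_add_hasCompactSupport_eq_one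
    [FiniteDimensional ℝ V] :
    ∃ m ρ : V → ℝ, m.HasTemperateGrowth ∧ ContDiff ℝ ∞ ρ ∧ HasCompactSupport ρ ∧
      ∀ x, ‖x‖ ^ 2 * m x + ρ x = 1 := by
  obtain ⟨m, hm, m_eq⟩ := exists_hasTemperateGrowth_eq_inv_norm_sq V one_pos
  refine ⟨m, fun x => 1 - ‖x‖ ^ 2 * m x, hm, contDiff_const.sub ((contDiff_norm_sq ℝ).mul hm.1),
    .of_support_subset_isCompact (isCompact_closedBall 0 1) fun x hx => ?_, fun x => by ring⟩
  by_contra hx'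
  rw [mem_closedBall_zero_iff, not_le] at hx'
  refine hx ?_
  simp only [m_eq x hx'.le]
  field_simp
  simp

end Cutoff

theorem lineDerivOp_postcompCLM {𝕜 E F G : Type*} [RCLike 𝕜] [NormedAddCommGroup E]
    [NormedSpace ℝ E] [NormedAddCommGroup F] [NormedSpace ℝ F] [NormedSpace 𝕜 F]
    [NormedAddCommGroup G] [NormedSpace ℝ G] [NormedSpace 𝕜 G] [LinearMap.CompatibleSMul F G ℝ 𝕜]
    (L : F →L[𝕜] G) (f : 𝓢(E, F)) (v : E) :
    ∂_{v} (postcompCLM L f) = postcompCLM L (∂_{v} f) := by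
  ext x
  have hasFDerivAt : HasFDerivAt (fun y => L (f y)) (L.restrictScalars ℝ ∘L fderiv ℝ f x) x :=
    (L.restrictScalars ℝ).hasFDerivAt.comp x (f.hasFDerivAt x)
  simp only [lineDerivOp_apply_eq_fderiv, postcompCLM_apply]
  exact DFunLike.congr_fun hasFDerivAt.fderiv v

section InnerProductSpace

variable {ι V F : Type*} [Fintype ι] [NormedAddCommGroup V] [InnerProductSpace ℝ V]
  [NormedAddCommGroup F] [CompleteSpace F]

theorem exists_schwartz_eq_sum_inner_smul [NormedSpace ℝ F] (b : OrthonormalBasis ι ℝ V)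
    (f : 𝓢(V, F)) (hf : f 0 = 0) :
    ∃ g : ι → 𝓢(V, F), f = ∑ i, smulLeftCLM F (inner ℝ · (b i)) (g i) := by
  have := b.toBasis.finiteDimensional_of_finite
  obtain ⟨m, ρ, hm, ρ_contDiff, ρ_compact, m_add_ρ⟩ :=
    exists_norm_sq_mul_hasTemperateGrowth_add_hasCompactSupport_eq_one V
  obtain ⟨A, A_contDiff, f_eq⟩ := exists_contDiff_eq_add_apply_self (n := ⊤) (f.smooth ⊤)
  let near (i : ι) : 𝓢(V, F) := HasCompactSupport.toSchwartzMap (f := fun x => ρ x • A x (b i))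
    ρ_compact.smul_right (ρ_contDiff.smul (A_contDiff.clm_apply contDiff_const))
  have coeff_temperate (i : ι) : (fun x => inner ℝ x (b i) * m x).HasTemperateGrowth :=
    (Function.hasTemperateGrowth_inner_left (b i)).mul hm
  refine ⟨fun i => smulLeftCLM F (fun x => inner ℝ x (b i) * m x) f + near i, ext fun x => ?_⟩
  have A_self : A x x = ∑ i, inner ℝ x (b i) • A x (b i) := by
    conv_lhs => arg 2; rw [← b.sum_repr' x]
    simp only [map_sum, map_smul, real_inner_comm]
  calc f x = (‖x‖ ^ 2 * m x) • f x + ρ x • A x x := by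
        rw [← zero_add (A x x), ← hf, ← f_eq, ← add_smul, m_add_ρ, one_smul]
    _ = ∑ i, inner ℝ x (b i) • ((inner ℝ x (b i) * m x) • f x + ρ x • A x (b i)) := by
        rw [A_self, ← b.sum_sq_inner_left, Finset.sum_mul, Finset.sum_smul, Finset.smul_sum,
          ← Finset.sum_add_distrib]
        refine Finset.sum_congr rfl fun i _ => ?_
        module
    _ = _ := by
        simp only [sum_apply, smulLeftCLM_apply_apply (Function.hasTemperateGrowth_inner_left _),
          add_apply, smulLeftCLM_apply_apply (coeff_temperate _)]
        rfl

theorem exists_schwartz_eq_sum_lineDeriv_of_orthonormalBasis [NormedSpace ℂ F]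
    [FiniteDimensional ℝ V] [MeasurableSpace V] [BorelSpace V] (b : OrthonormalBasis ι ℝ V)
    (f : 𝓢(V, F)) (hf : ∫ x, f x = 0) : ∃ g : ι → 𝓢(V, F), f = ∑ i, ∂_{b i} (g i) := by
  have fourier_zero : 𝓕 f 0 = 0 := by
    simpa [fourier_coe, Real.fourier_eq] using hf
  obtain ⟨G, hG⟩ := exists_schwartz_eq_sum_inner_smul b (𝓕 f) fourier_zero
  have two_pi_I_ne_zero : (2 * Real.pi * Complex.I : ℂ) ≠ 0 := by simp [Real.pi_ne_zero]
  refine ⟨fun i => 𝓕⁻ ((2 * Real.pi * Complex.I : ℂ)⁻¹ • G i), ?_⟩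
  calc f = 𝓕⁻ (𝓕 f) := (FourierTransform.fourierInv_fourier_eq f).symm
    _ = ∑ i, 𝓕⁻ (smulLeftCLM F (inner ℝ · (b i)) (G i)) := by
        rw [hG]
        exact map_sum (FourierTransform.fourierInvCLM ℂ 𝓢(V, F)) _ _
    _ = ∑ i, ∂_{b i} (𝓕⁻ ((2 * Real.pi * Complex.I : ℂ)⁻¹ • G i)) := by
        refine Finset.sum_congr rfl fun i _ => ?_
        rw [lineDerivOp_fourierInv_eq]
        congr 1
        ext x
        simp only [smul_apply, smulLeftCLM_apply_apply (Function.hasTemperateGrowth_inner_left _)]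
        rw [smul_comm _ (inner ℝ _ _), smul_smul, mul_inv_cancel₀ two_pi_I_ne_zero, one_smul]

end InnerProductSpace

theorem exists_integral_comp_continuousLinearEquiv_eq_smul {D E F : Type*}
    [NormedAddCommGroup D] [NormedSpace ℝ D] [MeasurableSpace D] [BorelSpace D]
    [NormedAddCommGroup E] [NormedSpace ℝ E] [FiniteDimensional ℝ E] [MeasurableSpace E]
    [BorelSpace E] [NormedAddCommGroup F] [NormedSpace ℝ F] (L : D ≃L[ℝ] E)
    (μ : Measure D) (ν : Measure E) [μ.IsAddHaarMeasure] [ν.IsAddHaarMeasure] :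
    ∃ c : NNReal, ∀ f : E → F, ∫ x, f (L x) ∂μ = c • ∫ y, f y ∂ν := by
  have := L.isAddHaarMeasure_map μ
  refine ⟨(μ.map L).addHaarScalarFactor ν, fun f => ?_⟩
  rw [← integral_smul_nnreal_measure, ← Measure.isAddLeftInvariant_eq_smul]
  exact (L.toHomeomorph.measurableEmbedding.integral_map f).symm

section HaarMeasure

variable {ι E : Type*} [Fintype ι] [NormedAddCommGroup E] [NormedSpace ℝ E] [MeasurableSpace E]
  [BorelSpace E]

theorem exists_schwartz_eq_sum_lineDeriv_of_basis {F : Type*} [NormedAddCommGroup F]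
    [NormedSpace ℂ F] [CompleteSpace F] (b : Basis ι ℝ E) (μ : Measure E) [μ.IsAddHaarMeasure]
    (f : 𝓢(E, F)) (hf : ∫ x, f x ∂μ = 0) : ∃ g : ι → 𝓢(E, F), f = ∑ i, ∂_{b i} (g i) := by
  classical
  have := b.finiteDimensional_of_finite
  let L : EuclideanSpace ℝ ι ≃L[ℝ] E := (EuclideanSpace.equiv ι ℝ).trans b.equivFunL.symm
  have L_basisFun (i : ι) : L (EuclideanSpace.basisFun ι ℝ i) = b i := by
    rw [EuclideanSpace.basisFun_apply, ← L.eq_symm_apply]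
    ext j
    simp [L, Finsupp.single_apply, eq_comm]
  obtain ⟨c, hc⟩ := exists_integral_comp_continuousLinearEquiv_eq_smul (F := F) L volume μ
  obtain ⟨g, hg⟩ := exists_schwartz_eq_sum_lineDeriv_of_orthonormalBasis
    (EuclideanSpace.basisFun ι ℝ) (compCLMOfContinuousLinearEquiv ℂ L f) (by simp [hc, hf])
  refine ⟨fun i => compCLMOfContinuousLinearEquiv ℂ L.symm (g i), ?_⟩
  calc f = compCLMOfContinuousLinearEquiv ℂ L.symm (compCLMOfContinuousLinearEquiv ℂ L f) := by
        ext; simp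
    _ = ∑ i, ∂_{b i} (compCLMOfContinuousLinearEquiv ℂ L.symm (g i)) := by
        simp [hg, lineDerivOp_compCLMOfContinuousLinearEquiv, ← L_basisFun]

theorem exists_schwartz_eq_sum_lineDeriv {𝕜 : Type*} [RCLike 𝕜] (b : Basis ι ℝ E)
    (μ : Measure E) [μ.IsAddHaarMeasure] (f : 𝓢(E, 𝕜)) (hf : ∫ x, f x ∂μ = 0) :
    ∃ g : ι → 𝓢(E, 𝕜), f = ∑ i, ∂_{b i} (g i) := by
  have := b.finiteDimensional_of_finite
  have integral_map_eq_zero : ∫ x, postcompCLM (RCLike.map 𝕜 ℂ) f x ∂μ = 0 := by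
    simp only [postcompCLM_apply, ContinuousLinearMap.integral_comp_comm _ f.integrable, hf,
      map_zero]
  obtain ⟨g, hg⟩ := exists_schwartz_eq_sum_lineDeriv_of_basis b μ _ integral_map_eq_zero
  refine ⟨fun i => postcompCLM (RCLike.map ℂ 𝕜) (g i), ?_⟩
  calc f = postcompCLM (RCLike.map ℂ 𝕜) (postcompCLM (RCLike.map 𝕜 ℂ) f) := by
        ext; simp
    _ = ∑ i, ∂_{b i} (postcompCLM (RCLike.map ℂ 𝕜) (g i)) := by
        simp [hg, lineDerivOp_postcompCLM]

end HaarMeasure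

section Integral

variable {E F : Type*} [NormedAddCommGroup E] [NormedSpace ℝ E] [FiniteDimensional ℝ E]
  [MeasurableSpace E] [BorelSpace E] [NormedAddCommGroup F] [NormedSpace ℝ F]
  (μ : Measure E) [μ.IsAddHaarMeasure]

theorem integral_lineDerivOp_eq_zero (f : 𝓢(E, F)) (v : E) : ∫ x, ∂_{v} f x ∂μ = 0 := by
  simpa [lineDerivOp_apply_eq_fderiv] using
    integral_bilinear_hasLineDerivAt_right_eq_neg_left_of_integrable (μ := μ)
      (f := fun _ => (1 : ℝ)) (f' := fun _ => 0) (B := ContinuousLinearMap.lsmul ℝ ℝ) (by simp)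
      (by simpa using (∂_{v} f).integrable) (by simpa using f.integrable)
      (fun x _ => by simpa using (hasFDerivAt_const (1 : ℝ) x).hasLineDerivAt v)
      (fun x _ => (f.hasFDerivAt x).hasLineDerivAt v)

theorem integralCLM_surjective (𝕜 : Type*) [RCLike 𝕜] [NormedSpace 𝕜 F] [CompleteSpace F] :
    Function.Surjective (integralCLM 𝕜 μ : 𝓢(E, F) →L[𝕜] F) := by
  intro y
  let φ : ContDiffBump (0 : E) := default
  let f : 𝓢(E, F) := HasCompactSupport.toSchwartzMap (f := fun x => φ.normed μ x • y)
    φ.hasCompactSupport_normed.smul_right (φ.contDiff_normed.smul contDiff_const)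
  refine ⟨f, ?_⟩
  calc integralCLM 𝕜 μ f = ∫ x, φ.normed μ x • y ∂μ := rfl
    _ = y := by rw [integral_smul_const, φ.integral_normed, one_smul]

end Integral

section Divergence

variable {𝕜 ι E F : Type*} [RCLike 𝕜] [Fintype ι] [NormedAddCommGroup E] [NormedSpace ℝ E]
  [NormedAddCommGroup F] [NormedSpace ℝ F] [NormedSpace 𝕜 F] [SMulCommClass ℝ 𝕜 F]

variable (𝕜 F) in
/-- The divergence `(gᵢ)ᵢ ↦ ∑ ∂ᵢ gᵢ` on Schwartz functions, with `∂ᵢ` the derivative in the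
direction `v i`. When `v` is a basis, its cokernel is the zeroth homology of the translation
action. -/
noncomputable def schwartzDivergence (v : ι → E) : (ι → 𝓢(E, F)) →ₗ[𝕜] 𝓢(E, F) :=
  ∑ i, (LineDeriv.lineDerivOpCLM 𝕜 𝓢(E, F) (v i)).toLinearMap ∘ₗ LinearMap.proj i

theorem schwartzDivergence_apply (v : ι → E) (g : ι → 𝓢(E, F)) :
    schwartzDivergence 𝕜 F v g = ∑ i, ∂_{v i} (g i) := by
  simp [schwartzDivergence]

theorem range_schwartzDivergence_eq_span (v : ι → E) :
    (schwartzDivergence 𝕜 F v).range =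
      Submodule.span 𝕜 {h | ∃ (g : 𝓢(E, F)) (i : ι), h = ∂_{v i} g} := by
  classical
  apply le_antisymm
  · rintro - ⟨g, rfl⟩
    rw [schwartzDivergence_apply]
    exact Submodule.sum_mem _ fun i _ => Submodule.subset_span ⟨g i, i, rfl⟩
  · refine Submodule.span_le.2 ?_
    rintro - ⟨g, i, rfl⟩
    refine ⟨Pi.single i g, ?_⟩
    rw [schwartzDivergence_apply, Finset.sum_eq_single i] <;>
      simp +contextual [LineDeriv.lineDerivOp_zero]

variable (𝕜) in
theorem range_schwartzDivergence_eq_ker_integralCLM [MeasurableSpace E] [BorelSpace E]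
    [FiniteDimensional ℝ E] (b : Basis ι ℝ E) (μ : Measure E) [μ.IsAddHaarMeasure] :
    (schwartzDivergence 𝕜 𝕜 b).range = (integralCLM 𝕜 μ : 𝓢(E, 𝕜) →L[𝕜] 𝕜).ker := by
  apply le_antisymm
  · rintro - ⟨g, rfl⟩
    simp [schwartzDivergence_apply, -integralCLM_apply, integralCLM_apply 𝕜 (∂_{_} _),
      integral_lineDerivOp_eq_zero]
  · intro f hf
    obtain ⟨g, rfl⟩ := exists_schwartz_eq_sum_lineDeriv b μ f hf
    exact ⟨g, schwartzDivergence_apply b g⟩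

end Divergence

theorem schwartzDerivSpan_eq_range_schwartzDivergence (n : ℕ) :
    schwartzDerivSpan n = (schwartzDivergence ℝ ℝ (Pi.basisFun ℝ (Fin n))).range := by
  simp [schwartzDerivSpan, range_schwartzDivergence_eq_span, SchwartzMap.ext_iff,
    lineDerivOp_apply_eq_fderiv]

theorem schwartz_integral_zero_iff_sum_of_derivatives_general {𝕜 ι E : Type*} [RCLike 𝕜]
    [Fintype ι] [NormedAddCommGroup E] [NormedSpace ℝ E] [MeasurableSpace E] [BorelSpace E]
    (b : Basis ι ℝ E) (μ : Measure E) [μ.IsAddHaarMeasure] :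
    (∀ f : 𝓢(E, 𝕜), ∫ x, f x ∂μ = 0 ↔ ∃ g : ι → 𝓢(E, 𝕜), f = ∑ i, ∂_{b i} (g i)) ∧
    IsClosed ((schwartzDivergence 𝕜 𝕜 b).range : Set 𝓢(E, 𝕜)) ∧
    finrank 𝕜 (𝓢(E, 𝕜) ⧸ (schwartzDivergence 𝕜 𝕜 b).range) = 1 := by
  have := b.finiteDimensional_of_finite
  have range_eq_ker := range_schwartzDivergence_eq_ker_integralCLM 𝕜 b μ
  refine ⟨fun f => ?_, ?_, ?_⟩
  · simpa [schwartzDivergence_apply, eq_comm] using (SetLike.ext_iff.1 range_eq_ker f).symm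
  · rw [range_eq_ker]
    exact ContinuousLinearMap.isClosed_ker _
  · rw [range_eq_ker,
      (LinearMap.quotKerEquivOfSurjective _ (integralCLM_surjective μ 𝕜)).finrank_eq,
      finrank_self]

/-- A Schwartz function `f ∈ 𝒮(ℝⁿ)` has `∫ f = 0` if and only if it is a sum of
partial derivatives `f = ∂₁g₁ + ⋯ + ∂_n g_n` of Schwartz functions.  Consequently
the subspace of such sums is closed and of codimension one in `𝒮(ℝⁿ)`: the zeroth
Lie algebra homology of `𝒮(ℝⁿ)` under the translation action of `ℝⁿ` is separated
and one-dimensional. -/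
theorem schwartz_integral_zero_iff_sum_of_derivatives (n : ℕ) (hn : 1 ≤ n) :
    (∀ f : SchwartzMap (Fin n → ℝ) ℝ,
      (∫ x, f x) = 0 ↔
        ∃ g : Fin n → SchwartzMap (Fin n → ℝ) ℝ,
          ∀ x, f x = ∑ i : Fin n, fderiv ℝ (g i) x (Pi.single i 1)) ∧
    IsClosed ((schwartzDerivSpan n : Submodule ℝ (SchwartzMap (Fin n → ℝ) ℝ)) :
      Set (SchwartzMap (Fin n → ℝ) ℝ)) ∧
    Module.finrank ℝ (SchwartzMap (Fin n → ℝ) ℝ ⧸ schwartzDerivSpan n) = 1 := by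
  rw [schwartzDerivSpan_eq_range_schwartzDivergence]
  simpa [SchwartzMap.ext_iff, sum_apply, lineDerivOp_apply_eq_fderiv] using
    schwartz_integral_zero_iff_sum_of_derivatives_general (𝕜 := ℝ) (Pi.basisFun ℝ (Fin n)) volume
end

section
/- Let λ ∈ ℝ and let g : ℝ → ℂ be a Schwartz function. Then there exists a Schwartz function f : ℝ → ℂ with g(x) = f′(x) + iλ f(x) for all x ∈ ℝ if and only if ∫_ℝ g(x) e^{iλx} dx = 0. Consequently, {f′ + iλf : f ∈ 𝒮(ℝ,ℂ)} is a closed subspace of 𝒮(ℝ,ℂ) of codimension one. (This is the case of the main theorem where H = ℝ acts on X = ℝ by translations, twisted by the tempered unitary character x ↦ e^{iλx}.) -/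
/-!
Multiplication by the character `χ x = exp (i c x)` is an automorphism of the Schwartz space, and
`(χ f)′ = χ (f′ + i c f)`, so it conjugates `f ↦ f′ + i c f` to the derivative. It therefore
suffices to see that a Schwartz function `g` with `∫ g = 0` has a Schwartz primitive. For
`F x = ∫_{-∞}^x g` only the decay of `F` itself is at stake. When `x ≤ 0`, every `t ≤ x` satisfies
`|x| ≤ |t|`, whence `|x|^k |F x| ≤ ∫ |t|^k |g t| dt`; when `x ≥ 0`, the vanishing of the integral
gives `F x = -∫_x^∞ g`, and the same estimate applies on `(x, ∞)`.

The range of the twisted derivative is thus the kernel of `g ↦ ∫ χ g`, which is continuous and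
surjective.
-/

open MeasureTheory Complex

/-- The subspace `{f′ + iλf : f ∈ 𝒮(ℝ,ℂ)}` of the complex Schwartz space `𝒮(ℝ,ℂ)`. -/
noncomputable def twistedDerivRange (lam : ℝ) : Submodule ℂ (SchwartzMap ℝ ℂ) :=
  Submodule.span ℂ {h : SchwartzMap ℝ ℂ |
    ∃ f : SchwartzMap ℝ ℂ, ∀ x : ℝ, h x = deriv f x + Complex.I * (lam : ℂ) * f x}

open Set
open scoped ContDiff SchwartzMap

section Primitive

variable {E : Type*} [NormedAddCommGroup E] [NormedSpace ℝ E]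

lemma hasDerivAt_integral_Iic [CompleteSpace E] {f : ℝ → E} (hf : Integrable f) {x : ℝ}
    (hx : ContinuousAt f x) : HasDerivAt (fun y ↦ ∫ t in Iic y, f t) (f x) x := by
  have h_split : (fun y ↦ ∫ t in Iic y, f t) =
      fun y ↦ (∫ t in Iic x, f t) + ∫ t in x..y, f t := by
    funext y
    rw [← intervalIntegral.integral_Iic_sub_Iic hf.integrableOn hf.integrableOn,
      add_sub_cancel]
  rw [h_split]
  exact (intervalIntegral.integral_hasDerivAt_right hf.intervalIntegrable
    hf.aestronglyMeasurable.stronglyMeasurableAtFilter hx).const_add _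

lemma pow_mul_norm_setIntegral_le {D : Type*} [NormedAddCommGroup D] [MeasurableSpace D]
    {μ : Measure D} {f : D → E} {k : ℕ} (hf : Integrable (fun t ↦ ‖t‖ ^ k * ‖f t‖) μ)
    {s : Set D} (hs : MeasurableSet s) {r : ℝ} (hr : 0 ≤ r) (hrs : ∀ t ∈ s, r ≤ ‖t‖) :
    r ^ k * ‖∫ t in s, f t ∂μ‖ ≤ ∫ t, ‖t‖ ^ k * ‖f t‖ ∂μ :=
  calc r ^ k * ‖∫ t in s, f t ∂μ‖
      ≤ r ^ k * ∫ t in s, ‖f t‖ ∂μ := by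
        gcongr
        exact norm_integral_le_integral_norm _
    _ = ∫ t in s, r ^ k * ‖f t‖ ∂μ := (integral_const_mul _ _).symm
    _ ≤ ∫ t in s, ‖t‖ ^ k * ‖f t‖ ∂μ := by
        refine integral_mono_of_nonneg (.of_forall fun t ↦ by positivity) hf.integrableOn ?_
        filter_upwards [ae_restrict_mem hs] with t ht
        gcongr
        exact hrs t ht
    _ ≤ ∫ t, ‖t‖ ^ k * ‖f t‖ ∂μ :=
        setIntegral_le_integral hf (.of_forall fun t ↦ by positivity)

lemma pow_mul_norm_integral_Iic_le {f : ℝ → E} {k : ℕ} (hf : Integrable f)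
    (hfk : Integrable fun t ↦ ‖t‖ ^ k * ‖f t‖) (hf_zero : ∫ t, f t = 0) (x : ℝ) :
    ‖x‖ ^ k * ‖∫ t in Iic x, f t‖ ≤ ∫ t, ‖t‖ ^ k * ‖f t‖ := by
  rcases le_total x 0 with hx | hx
  · refine pow_mul_norm_setIntegral_le hfk measurableSet_Iic (norm_nonneg x) fun t ht ↦ ?_
    exact abs_le_abs_of_nonpos hx ht
  · have h_add : (∫ t in Iic x, f t) + ∫ t in Ioi x, f t = 0 :=
      (intervalIntegral.integral_Iic_add_Ioi hf.integrableOn hf.integrableOn).trans hf_zero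
    rw [eq_neg_of_add_eq_zero_left h_add, norm_neg]
    refine pow_mul_norm_setIntegral_le hfk measurableSet_Ioi (norm_nonneg x) fun t ht ↦ ?_
    exact abs_le_abs_of_nonneg hx (le_of_lt ht)

lemma exists_schwartzMap_coe_eq_of_hasDerivAt {F : ℝ → E} {g : 𝓢(ℝ, E)}
    (hF : ∀ x, HasDerivAt F (g x) x) (hF_decay : ∀ k : ℕ, ∃ C, ∀ x, ‖x‖ ^ k * ‖F x‖ ≤ C) :
    ∃ f : 𝓢(ℝ, E), ⇑f = F := by
  have h_deriv : deriv F = g := funext fun x ↦ (hF x).deriv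
  refine ⟨⟨F, ?_, ?_⟩, rfl⟩
  · refine contDiff_infty_iff_deriv.2 ⟨fun x ↦ (hF x).differentiableAt, ?_⟩
    rw [h_deriv]
    exact g.smooth ⊤
  · rintro k (_ | n)
    · simpa only [norm_iteratedFDeriv_zero] using hF_decay k
    · obtain ⟨C, -, hC⟩ := g.decay k n
      refine ⟨C, fun x ↦ ?_⟩
      simpa only [norm_iteratedFDeriv_eq_norm_iteratedDeriv, iteratedDeriv_succ', h_deriv]
        using hC x

variable (𝕜 : Type*) [RCLike 𝕜] [NormedSpace 𝕜 E]

theorem range_derivCLM_eq_ker_integralCLM [CompleteSpace E] :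
    (SchwartzMap.derivCLM 𝕜 E).range =
      (SchwartzMap.integralCLM 𝕜 volume : 𝓢(ℝ, E) →L[𝕜] E).ker := by
  ext g
  simp only [LinearMap.mem_range, LinearMap.mem_ker, ContinuousLinearMap.coe_coe,
    SchwartzMap.integralCLM_apply]
  constructor
  · rintro ⟨f, rfl⟩
    exact integral_eq_zero_of_hasDerivAt_of_integrable f.hasDerivAt
      (SchwartzMap.derivCLM 𝕜 E f).integrable f.integrable
  · intro hg
    have hF (x : ℝ) : HasDerivAt (fun y ↦ ∫ t in Iic y, g t) (g x) x :=
      hasDerivAt_integral_Iic g.integrable g.continuous.continuousAt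
    obtain ⟨f, hf⟩ := exists_schwartzMap_coe_eq_of_hasDerivAt hF fun k ↦
      ⟨_, pow_mul_norm_integral_Iic_le g.integrable (g.integrable_pow_mul volume k) hg⟩
    refine ⟨f, SchwartzMap.ext fun x ↦ ?_⟩
    rw [SchwartzMap.derivCLM_apply, hf, (hF x).deriv]

lemma integralCLM_surjective_s10 [CompleteSpace E] {D : Type*} [NormedAddCommGroup D]
    [NormedSpace ℝ D] [FiniteDimensional ℝ D] [MeasurableSpace D] [BorelSpace D]
    (μ : Measure D) [IsLocallyFiniteMeasure μ] [μ.IsOpenPosMeasure] [μ.HasTemperateGrowth] :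
    Function.Surjective (SchwartzMap.integralCLM 𝕜 μ : 𝓢(D, E) →L[𝕜] E) := by
  intro v
  let b : ContDiffBump (0 : D) := default
  have hb_supp : HasCompactSupport fun x ↦ b.normed μ x • v := b.hasCompactSupport_normed.smul_right
  have hb_smooth : ContDiff ℝ ∞ fun x ↦ b.normed μ x • v := b.contDiff_normed.smul contDiff_const
  refine ⟨hb_supp.toSchwartzMap hb_smooth, ?_⟩
  calc ∫ x, b.normed μ x • v ∂μ = (∫ x, b.normed μ x ∂μ) • v := integral_smul_const _ _
    _ = v := by rw [b.integral_normed, one_smul]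

end Primitive

section Character

/-- The unitary character `x ↦ exp (i c x)` of the additive group `ℝ`, by which Schwartz functions
are twisted. -/
noncomputable def unitaryCharacter (c x : ℝ) : ℂ := exp (I * c * x)

lemma unitaryCharacter_mul_neg (c : ℝ) : unitaryCharacter c * unitaryCharacter (-c) = 1 := by
  funext x
  simp [unitaryCharacter, ← Complex.exp_add]

lemma norm_unitaryCharacter (c x : ℝ) : ‖unitaryCharacter c x‖ = 1 := by
  simp [unitaryCharacter, Complex.norm_exp]

lemma hasDerivAt_unitaryCharacter (c x : ℝ) :
    HasDerivAt (unitaryCharacter c) (I * c * unitaryCharacter c x) x := by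
  have h_phase : HasDerivAt (fun y : ℝ ↦ I * (c : ℂ) * y) (I * c) x := by
    simpa using ofRealCLM.hasDerivAt.const_mul (I * (c : ℂ))
  exact h_phase.cexp.congr_deriv (mul_comm _ _)

lemma iteratedDeriv_unitaryCharacter (c : ℝ) (n : ℕ) :
    iteratedDeriv n (unitaryCharacter c) = fun x ↦ (I * c) ^ n * unitaryCharacter c x := by
  induction n with
  | zero => simp
  | succ n ih =>
    funext x
    rw [iteratedDeriv_succ, ih, ((hasDerivAt_unitaryCharacter c x).const_mul _).deriv, pow_succ]
    ring

lemma hasTemperateGrowth_unitaryCharacter (c : ℝ) : (unitaryCharacter c).HasTemperateGrowth := by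
  refine ⟨?_, fun n ↦ ⟨0, |c| ^ n, fun x ↦ ?_⟩⟩
  · exact (contDiff_const.mul ofRealCLM.contDiff).cexp
  · simp [norm_iteratedFDeriv_eq_norm_iteratedDeriv, iteratedDeriv_unitaryCharacter,
      norm_unitaryCharacter]

end Character

section TwistedDerivative

variable {E : Type*} [NormedAddCommGroup E] [NormedSpace ℂ E]

lemma smulLeftCLM_unitaryCharacter_smulLeftCLM_neg (c : ℝ) (f : 𝓢(ℝ, E)) :
    SchwartzMap.smulLeftCLM E (unitaryCharacter c)
      (SchwartzMap.smulLeftCLM E (unitaryCharacter (-c)) f) = f := by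
  rw [SchwartzMap.smulLeftCLM_smulLeftCLM_apply (hasTemperateGrowth_unitaryCharacter c)
    (hasTemperateGrowth_unitaryCharacter (-c)), unitaryCharacter_mul_neg]
  exact SchwartzMap.ext fun x ↦ by simp [Pi.one_def]

/-- Multiplication by `unitaryCharacter c` as an automorphism of the Schwartz space; its inverse is
multiplication by `unitaryCharacter (-c)`. -/
noncomputable def twist (c : ℝ) : 𝓢(ℝ, E) ≃L[ℂ] 𝓢(ℝ, E) :=
  .equivOfInverse (SchwartzMap.smulLeftCLM E (unitaryCharacter c))
    (SchwartzMap.smulLeftCLM E (unitaryCharacter (-c)))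
    (fun f ↦ by simpa only [neg_neg] using smulLeftCLM_unitaryCharacter_smulLeftCLM_neg (-c) f)
    (smulLeftCLM_unitaryCharacter_smulLeftCLM_neg c)

lemma twist_apply (c : ℝ) (f : 𝓢(ℝ, E)) (x : ℝ) : twist c f x = unitaryCharacter c x • f x :=
  SchwartzMap.smulLeftCLM_apply_apply (hasTemperateGrowth_unitaryCharacter c) f x

/-- The derivative twisted by `unitaryCharacter c`: the operator `f ↦ f′ + i c f` on the Schwartz
space. -/
noncomputable def twistedDeriv (c : ℝ) : 𝓢(ℝ, E) →L[ℂ] 𝓢(ℝ, E) :=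
  SchwartzMap.derivCLM ℂ E + (I * c) • ContinuousLinearMap.id ℂ 𝓢(ℝ, E)

lemma twistedDeriv_apply (c : ℝ) (f : 𝓢(ℝ, E)) (x : ℝ) :
    twistedDeriv c f x = deriv f x + (I * c) • f x :=
  rfl

lemma mem_range_twistedDeriv_iff (c : ℝ) (g : 𝓢(ℝ, E)) :
    g ∈ (twistedDeriv c).range ↔ ∃ f : 𝓢(ℝ, E), ∀ x, g x = deriv f x + (I * c) • f x :=
  exists_congr fun _ ↦ eq_comm.trans DFunLike.ext_iff

lemma derivCLM_twist (c : ℝ) (f : 𝓢(ℝ, E)) :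
    SchwartzMap.derivCLM ℂ E (twist c f) = twist c (twistedDeriv c f) := by
  ext x
  have h_coe : ⇑(twist c f) = unitaryCharacter c • ⇑f := funext (twist_apply c f)
  rw [SchwartzMap.derivCLM_apply, h_coe,
    ((hasDerivAt_unitaryCharacter c x).smul (f.hasDerivAt x)).deriv, twist_apply,
    twistedDeriv_apply, smul_add, smul_smul, mul_comm (I * _)]

/-- The integral twisted by `unitaryCharacter c`: the map `g ↦ ∫ exp (i c x) g(x) dx` on the
Schwartz space, whose kernel is the range of `twistedDeriv c`. -/
noncomputable def twistedIntegral (c : ℝ) : 𝓢(ℝ, E) →L[ℂ] E :=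
  SchwartzMap.integralCLM ℂ volume ∘L (twist c).toContinuousLinearMap

lemma twistedIntegral_apply (c : ℝ) (g : 𝓢(ℝ, E)) :
    twistedIntegral c g = ∫ x : ℝ, exp (I * c * x) • g x :=
  integral_congr_ae (.of_forall (twist_apply c g))

variable [CompleteSpace E]

lemma twistedIntegral_surjective (c : ℝ) :
    Function.Surjective (twistedIntegral c : 𝓢(ℝ, E) →L[ℂ] E) :=
  (integralCLM_surjective_s10 ℂ volume).comp (twist c).surjective

theorem range_twistedDeriv_eq_ker_twistedIntegral (c : ℝ) :
    (twistedDeriv c : 𝓢(ℝ, E) →L[ℂ] 𝓢(ℝ, E)).range = (twistedIntegral c).ker := by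
  ext g
  calc g ∈ (twistedDeriv c).range
      ↔ ∃ f, twist c (twistedDeriv c f) = twist c g :=
        exists_congr fun _ ↦ (twist c).injective.eq_iff.symm
    _ ↔ ∃ f, SchwartzMap.derivCLM ℂ E (twist c f) = twist c g := by simp only [derivCLM_twist]
    _ ↔ twist c g ∈ (SchwartzMap.derivCLM ℂ E).range :=
        ((twist c).surjective.exists (p := fun F ↦ SchwartzMap.derivCLM ℂ E F = twist c g)).symm
    _ ↔ g ∈ (twistedIntegral c).ker := by
        rw [range_derivCLM_eq_ker_integralCLM]
        rfl

theorem schwartz_twisted_deriv_range_general (c : ℝ) :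
    (∀ g : 𝓢(ℝ, E), (∃ f : 𝓢(ℝ, E), ∀ x : ℝ, g x = deriv f x + (I * c) • f x) ↔
      ∫ x : ℝ, exp (I * c * x) • g x = 0) ∧
    IsClosed ((twistedDeriv c : 𝓢(ℝ, E) →L[ℂ] 𝓢(ℝ, E)).range : Set 𝓢(ℝ, E)) ∧
    Nonempty ((𝓢(ℝ, E) ⧸ (twistedDeriv c : 𝓢(ℝ, E) →L[ℂ] 𝓢(ℝ, E)).range) ≃ₗ[ℂ] E) := by
  have h_range := range_twistedDeriv_eq_ker_twistedIntegral (E := E) c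
  refine ⟨fun g ↦ ?_, ?_, ?_⟩
  · rw [← mem_range_twistedDeriv_iff, h_range, ← twistedIntegral_apply]
    rfl
  · rw [h_range]
    exact (twistedIntegral c).isClosed_ker
  · rw [h_range]
    exact ⟨LinearMap.quotKerEquivOfSurjective _ (twistedIntegral_surjective c)⟩

end TwistedDerivative

lemma twistedDerivRange_eq_range_twistedDeriv (c : ℝ) :
    twistedDerivRange c = (twistedDeriv c : 𝓢(ℝ, ℂ) →L[ℂ] 𝓢(ℝ, ℂ)).range := by
  have h_set : {h : 𝓢(ℝ, ℂ) | ∃ f : 𝓢(ℝ, ℂ), ∀ x : ℝ, h x = deriv f x + I * (c : ℂ) * f x} =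
      (twistedDeriv c : 𝓢(ℝ, ℂ) →L[ℂ] 𝓢(ℝ, ℂ)).range :=
    Set.ext fun h ↦ (mem_range_twistedDeriv_iff c h).symm
  rw [twistedDerivRange, h_set, Submodule.span_eq]

/-- Let `λ ∈ ℝ` and `g ∈ 𝒮(ℝ,ℂ)`.  There exists a Schwartz function `f` with
`g = f′ + iλf` if and only if `∫ g(x) e^{iλx} dx = 0`.  Consequently
`{f′ + iλf : f ∈ 𝒮(ℝ,ℂ)}` is a closed subspace of `𝒮(ℝ,ℂ)` of codimension one.
(This is the case of the main theorem where `H = ℝ` acts on `X = ℝ` by translations,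
twisted by the tempered unitary character `x ↦ e^{iλx}`.) -/
theorem schwartz_twisted_deriv_range (lam : ℝ) :
    (∀ g : SchwartzMap ℝ ℂ,
      (∃ f : SchwartzMap ℝ ℂ,
          ∀ x : ℝ, g x = deriv f x + Complex.I * (lam : ℂ) * f x) ↔
        (∫ x : ℝ, g x * Complex.exp (Complex.I * (lam : ℂ) * (x : ℂ))) = 0) ∧
    IsClosed ((twistedDerivRange lam : Submodule ℂ (SchwartzMap ℝ ℂ)) :
      Set (SchwartzMap ℝ ℂ)) ∧
    Module.finrank ℂ (SchwartzMap ℝ ℂ ⧸ twistedDerivRange lam) = 1 := by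
  obtain ⟨h_iff, h_closed, ⟨e⟩⟩ := schwartz_twisted_deriv_range_general (E := ℂ) lam
  rw [twistedDerivRange_eq_range_twistedDeriv, e.finrank_eq, Module.finrank_self]
  exact ⟨by simpa only [smul_eq_mul, mul_comm (exp _)] using h_iff, h_closed, rfl⟩
end

section
/- Let n ≥ 2 and let g₁, …, g_n ∈ 𝒮(ℝⁿ) be Schwartz functions satisfying ∂_j g_i = ∂_i g_j for all 1 ≤ i, j ≤ n (i.e., the 1-form Σ g_i dx_i is closed). Then there exists a Schwartz function f ∈ 𝒮(ℝⁿ) with ∂_i f = g_i for all i. (This expresses the vanishing of the first de Rham cohomology with Schwartz coefficients of ℝⁿ for n ≥ 2, equivalently the vanishing of the Lie algebra homology H_{n−1} of the translation module 𝒮(ℝⁿ), as used in the computation of the homologies of 𝒮(H) for a Nash group H.) -/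
/-!
A closed rapidly decreasing 1-form `ω` has a smooth primitive `F` by the classical Poincaré lemma.
All derivatives of `F` of positive order are derivatives of `ω`, so only `F` itself has to be made
to decay, by subtracting a constant. Since `‖ω z‖ = O(‖z‖⁻ᵏ⁻²)`, the mean value inequality on the
segment from `t • x` to `t • y` bounds `F (t • y) - F (t • x)` by `O(t⁻¹)` as soon as the segment
from `x` to `y` avoids the origin. With `y = 2 • x` and `t = 2 ^ m`, this shows that `F (2 ^ m • x)`
converges geometrically, at distance `O(‖x‖⁻ᵏ⁻¹)` from `F x`. With `y` close to `x`, it shows that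
the limit is a locally constant function of `x ≠ 0`, hence a constant because the complement of the
origin is connected in dimension at least two.
-/

open Filter Metric SchwartzMap Topology

variable {E V : Type*} [NormedAddCommGroup E] [NormedSpace ℝ E]
  [NormedAddCommGroup V] [NormedSpace ℝ V]

section DecayingDerivative

variable {f : E → V} {f' : E → E →L[ℝ] V} {k : ℕ} {C : ℝ} {x y : E}

lemma norm_image_smul_sub_image_smul_le (hf : ∀ z, HasFDerivAt f (f' z) z)
    (hf' : ∀ z, ‖z‖ ^ (k + 2) * ‖f' z‖ ≤ C) {r t : ℝ} (hr : 0 < r)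
    (hxy : ∀ z ∈ segment ℝ x y, r ≤ ‖z‖) (ht : 1 ≤ t) :
    ‖f (t • y) - f (t • x)‖ ≤ C / r ^ (k + 2) * ‖y - x‖ / t := by
  have ht₀ : 0 < t := by linarith
  have hC : 0 ≤ C := (by positivity : 0 ≤ ‖x‖ ^ (k + 2) * ‖f' x‖).trans (hf' x)
  have hderiv (z : E) : HasFDerivAt (fun w ↦ f (t • w)) (t • f' (t • z)) z := by
    simpa [Function.comp_def] using (hf (t • z)).comp z ((hasFDerivAt_id z).const_smul t)
  have hbound : ∀ z ∈ segment ℝ x y, ‖t • f' (t • z)‖ ≤ C / r ^ (k + 2) / t := fun z hz ↦ by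
    have hdecay : (t * r) ^ (k + 2) * ‖f' (t • z)‖ ≤ C := by
      refine le_trans ?_ (hf' (t • z))
      rw [norm_smul, Real.norm_of_nonneg ht₀.le]
      gcongr
      exact hxy z hz
    calc ‖t • f' (t • z)‖ = t * ‖f' (t • z)‖ := by rw [norm_smul, Real.norm_of_nonneg ht₀.le]
      _ ≤ t * (C / (t * r) ^ (k + 2)) := by
        gcongr
        rwa [le_div_iff₀' (by positivity)]
      _ = C / r ^ (k + 2) / t ^ (k + 1) := by field_simp; ring
      _ ≤ C / r ^ (k + 2) / t := by
        gcongr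
        exact le_self_pow₀ ht k.succ_ne_zero
  calc ‖f (t • y) - f (t • x)‖ ≤ C / r ^ (k + 2) / t * ‖y - x‖ :=
        (convex_segment x y).norm_image_sub_le_of_norm_hasFDerivWithin_le
          (fun z _ ↦ (hderiv z).hasFDerivWithinAt) hbound
          (left_mem_segment ℝ x y) (right_mem_segment ℝ x y)
    _ = C / r ^ (k + 2) * ‖y - x‖ / t := by ring

lemma tendsto_image_smul_sub_image_smul_of_zero_notMem_segment
    (hf : ∀ z, HasFDerivAt f (f' z) z) (hf' : ∀ z, ‖z‖ ^ 2 * ‖f' z‖ ≤ C)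
    (hxy : 0 ∉ segment ℝ x y) :
    Tendsto (fun t : ℝ ↦ f (t • y) - f (t • x)) atTop (𝓝 0) := by
  have hclosed : IsClosed (segment ℝ x y) := by
    rw [segment_eq_image_lineMap]
    exact (isCompact_Icc.image AffineMap.lineMap_continuous).isClosed
  have hr : 0 < infDist 0 (segment ℝ x y) :=
    (hclosed.notMem_iff_infDist_pos ⟨x, left_mem_segment ℝ x y⟩).1 hxy
  have hle : ∀ z ∈ segment ℝ x y, infDist 0 (segment ℝ x y) ≤ ‖z‖ := fun z hz ↦ by
    simpa using infDist_le_dist_of_mem (x := 0) hz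
  have hbound : ∀ᶠ t : ℝ in atTop, ‖f (t • y) - f (t • x)‖ ≤
      C / infDist 0 (segment ℝ x y) ^ 2 * ‖y - x‖ / t := by
    filter_upwards [eventually_ge_atTop 1] with t ht
    exact norm_image_smul_sub_image_smul_le (k := 0) hf hf' hr hle ht
  exact squeeze_zero_norm' hbound (tendsto_const_nhds.div_atTop tendsto_id)

lemma tendsto_image_smul_sub_image_smul_of_one_lt_rank (hE : 1 < Module.rank ℝ E)
    (hf : ∀ z, HasFDerivAt f (f' z) z) (hf' : ∀ z, ‖z‖ ^ 2 * ‖f' z‖ ≤ C)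
    (hx : x ≠ 0) (hy : y ≠ 0) :
    Tendsto (fun t : ℝ ↦ f (t • y) - f (t • x)) atTop (𝓝 0) := by
  refine (isConnected_compl_singleton_of_one_lt_rank hE 0).isPreconnected.induction₂
    (fun u v ↦ Tendsto (fun t : ℝ ↦ f (t • v) - f (t • u)) atTop (𝓝 0))
    (fun u hu ↦ ?_) (fun u v w _ _ _ huv hvw ↦ ?_) (fun u v _ _ huv ↦ ?_) hx hy
  · have hu₀ : 0 < ‖u‖ := norm_pos_iff.2 hu
    filter_upwards [mem_nhdsWithin_of_mem_nhds (ball_mem_nhds u hu₀)] with v hv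
    refine tendsto_image_smul_sub_image_smul_of_zero_notMem_segment hf hf' fun h ↦ ?_
    simpa using (convex_ball u ‖u‖).segment_subset (mem_ball_self hu₀) hv h
  · simpa using hvw.add huv
  · simpa using huv.neg

lemma dist_image_two_pow_smul_le (hf : ∀ z, HasFDerivAt f (f' z) z)
    (hf' : ∀ z, ‖z‖ ^ (k + 2) * ‖f' z‖ ≤ C) (hx : x ≠ 0) (m : ℕ) :
    dist (f ((2 : ℝ) ^ m • x)) (f ((2 : ℝ) ^ (m + 1) • x)) ≤
      2 * C / ‖x‖ ^ (k + 1) / 2 / 2 ^ m := by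
  have hx₀ : 0 < ‖x‖ := norm_pos_iff.2 hx
  have hray : ∀ z ∈ segment ℝ x ((2 : ℝ) • x), ‖x‖ ≤ ‖z‖ := by
    rintro _ ⟨a, b, ha, hb, hab, rfl⟩
    rw [smul_smul, ← add_smul, norm_smul, Real.norm_of_nonneg (by positivity)]
    exact le_mul_of_one_le_left hx₀.le (by linarith)
  have h := norm_image_smul_sub_image_smul_le hf hf' hx₀ hray (one_le_pow₀ one_le_two (n := m))
  rw [dist_comm, dist_eq_norm, pow_succ, mul_smul]
  refine h.trans_eq ?_
  rw [two_smul, add_sub_cancel_right]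
  field_simp
  ring_nf

lemma norm_pow_mul_norm_sub_le_of_tendsto (hf : ∀ z, HasFDerivAt f (f' z) z)
    (hf' : ∀ z, ‖z‖ ^ (k + 2) * ‖f' z‖ ≤ C) (hx : x ≠ 0) {c : V}
    (hc : Tendsto (fun m : ℕ ↦ f ((2 : ℝ) ^ m • x)) atTop (𝓝 c)) :
    ‖x‖ ^ (k + 1) * ‖f x - c‖ ≤ 2 * C := by
  have h := dist_le_of_le_geometric_two_of_tendsto₀ (dist_image_two_pow_smul_le hf hf' hx) hc
  rwa [pow_zero, one_smul, dist_eq_norm, le_div_iff₀' (pow_pos (norm_pos_iff.2 hx) _)] at h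

lemma norm_le_max_of_norm_mul_norm_le (hf : ∀ z, HasFDerivAt f (f' z) z) {A B : ℝ}
    (hB : ∀ z, ‖f' z‖ ≤ B) (hA : ∀ z, ‖z‖ * ‖f z‖ ≤ A) (x : E) :
    ‖f x‖ ≤ max A (‖f 0‖ + B) := by
  rcases le_total ‖x‖ 1 with hx | hx
  · have hlip : ‖f x - f 0‖ ≤ B * ‖x‖ := by
      simpa using convex_univ.norm_image_sub_le_of_norm_hasFDerivWithin_le
        (fun z _ ↦ (hf z).hasFDerivWithinAt) (fun z _ ↦ hB z) (Set.mem_univ 0) (Set.mem_univ x)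
    have hB₀ : 0 ≤ B := (norm_nonneg _).trans (hB 0)
    refine le_max_of_le_right ?_
    calc ‖f x‖ ≤ ‖f 0‖ + ‖f x - f 0‖ := norm_le_norm_add_norm_sub' _ _
      _ ≤ ‖f 0‖ + B := by
        gcongr
        exact hlip.trans (mul_le_of_le_one_right hB₀ hx)
  · exact le_max_of_le_left ((le_mul_of_one_le_left (norm_nonneg _) hx).trans (hA x))

variable [CompleteSpace V]

lemma exists_forall_tendsto_image_two_pow_smul (hE : 1 < Module.rank ℝ E)
    (hf : ∀ z, HasFDerivAt f (f' z) z) (hf' : ∀ z, ‖z‖ ^ 2 * ‖f' z‖ ≤ C) :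
    ∃ c, ∀ x, x ≠ 0 → Tendsto (fun m : ℕ ↦ f ((2 : ℝ) ^ m • x)) atTop (𝓝 c) := by
  have : Nontrivial E := (rank_pos_iff_nontrivial (R := ℝ)).1 (zero_lt_one.trans hE)
  obtain ⟨e, he⟩ := exists_ne (0 : E)
  obtain ⟨c, hc⟩ := cauchySeq_tendsto_of_complete <|
    cauchySeq_of_le_geometric_two (dist_image_two_pow_smul_le (k := 0) hf hf' he)
  refine ⟨c, fun x hx ↦ ?_⟩
  have hsub := (tendsto_image_smul_sub_image_smul_of_one_lt_rank hE hf hf' he hx).comp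
    (tendsto_pow_atTop_atTop_of_one_lt one_lt_two)
  simpa using hsub.add hc

lemma exists_const_forall_norm_pow_mul_norm_sub_le (hE : 1 < Module.rank ℝ E)
    (hf : ∀ z, HasFDerivAt f (f' z) z) (hf' : ∀ k : ℕ, ∃ C, ∀ z, ‖z‖ ^ k * ‖f' z‖ ≤ C) :
    ∃ c, ∀ k : ℕ, ∃ C, ∀ x, ‖x‖ ^ k * ‖f x - c‖ ≤ C := by
  obtain ⟨C₂, hC₂⟩ := hf' 2
  obtain ⟨c, hc⟩ := exists_forall_tendsto_image_two_pow_smul hE hf hC₂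
  have hdecay (k : ℕ) : ∃ C, ∀ x, ‖x‖ ^ (k + 1) * ‖f x - c‖ ≤ C := by
    obtain ⟨C, hC⟩ := hf' (k + 2)
    have hC₀ : 0 ≤ C := by simpa using hC 0
    refine ⟨2 * C, fun x ↦ ?_⟩
    rcases eq_or_ne x 0 with rfl | hx
    · simpa using hC₀
    · exact norm_pow_mul_norm_sub_le_of_tendsto hf hC hx (hc x hx)
  refine ⟨c, fun k ↦ ?_⟩
  rcases k with _ | k
  · obtain ⟨A, hA⟩ := hdecay 0
    obtain ⟨B, hB⟩ := hf' 0
    exact ⟨max A (‖f 0 - c‖ + B), fun x ↦ by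
      simpa using norm_le_max_of_norm_mul_norm_le (fun z ↦ (hf z).sub_const c)
        (by simpa using hB) (by simpa using hA) x⟩
  · exact hdecay k

end DecayingDerivative

section ClosedForm

lemma exists_schwartzMap_coe_eq_of_hasFDerivAt {f : E → V} (ω : 𝓢(E, E →L[ℝ] V))
    (hω : ∀ x, HasFDerivAt f (ω x) x) (hf : ∀ k : ℕ, ∃ C, ∀ x, ‖x‖ ^ k * ‖f x‖ ≤ C) :
    ∃ F : 𝓢(E, V), ⇑F = f := by
  have hfderiv : fderiv ℝ f = ω := funext fun x ↦ (hω x).fderiv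
  refine ⟨⟨f, ?_, fun k n ↦ ?_⟩, rfl⟩
  · rw [contDiff_infty_iff_fderiv, hfderiv]
    exact ⟨fun x ↦ (hω x).differentiableAt, ω.smooth'⟩
  · rcases n with _ | n
    · simpa using hf k
    · simpa only [← norm_iteratedFDeriv_fderiv, hfderiv] using! ω.decay' k n

lemma exists_schwartzMap_hasFDerivAt_of_fderiv_symmetric [CompleteSpace V]
    (hE : 1 < Module.rank ℝ E) (ω : 𝓢(E, E →L[ℝ] V))
    (hω : ∀ x u v, fderiv ℝ ω x u v = fderiv ℝ ω x v u) :
    ∃ f : 𝓢(E, V), ∀ x, HasFDerivAt f (ω x) x := by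
  obtain ⟨F, hF⟩ := convex_univ.exists_forall_hasFDerivAt_of_fderiv_symmetric isOpen_univ
    ω.differentiable.differentiableOn fun x _ ↦ hω x
  replace hF (x : E) : HasFDerivAt F (ω x) x := hF x (Set.mem_univ x)
  obtain ⟨c, hc⟩ := exists_const_forall_norm_pow_mul_norm_sub_le hE hF
    fun k ↦ by simpa using! ω.decay' k 0
  have hFc (x : E) : HasFDerivAt (fun y ↦ F y - c) (ω x) x := (hF x).sub_const c
  obtain ⟨f, hf⟩ := exists_schwartzMap_coe_eq_of_hasFDerivAt ω hFc hc
  exact ⟨f, hf ▸ hFc⟩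

variable {ι : Type*}

lemma exists_schwartzMap_forall_apply_basis_eq [Finite ι] (b : Module.Basis ι ℝ E)
    (g : ι → 𝓢(E, V)) :
    ∃ ω : 𝓢(E, E →L[ℝ] V), ∀ x i, ω x (b i) = g i x := by
  cases nonempty_fintype ι
  classical
  have : FiniteDimensional ℝ E := b.finiteDimensional_of_finite
  let dx (i : ι) : StrongDual ℝ E := (b.coord i).toContinuousLinearMap
  refine ⟨∑ i, (g i).postcompCLM (ContinuousLinearMap.smulRightL ℝ E V (dx i)), fun x i ↦ ?_⟩
  simp [dx, Finsupp.single_apply]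

lemma fderiv_symmetric_of_basis (b : Module.Basis ι ℝ E) {ω : E → E →L[ℝ] V} {x : E}
    (hω : DifferentiableAt ℝ ω x)
    (h : ∀ i j, fderiv ℝ (fun y ↦ ω y (b i)) x (b j) = fderiv ℝ (fun y ↦ ω y (b j)) x (b i))
    (u v : E) : fderiv ℝ ω x u v = fderiv ℝ ω x v u := by
  have heval (i : ι) (w : E) : fderiv ℝ (fun y ↦ ω y (b i)) x w = fderiv ℝ ω x w (b i) := by
    simp [fderiv_clm_apply hω (differentiableAt_const (b i))]
  have hflip : (fderiv ℝ ω x).toLinearMap₁₂ = (fderiv ℝ ω x).toLinearMap₁₂.flip :=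
    b.ext fun i ↦ b.ext fun j ↦ by simpa [heval] using h j i
  exact LinearMap.congr_fun₂ hflip u v

theorem schwartz_poincare_lemma_general [CompleteSpace V] [Finite ι] [Nontrivial ι]
    (b : Module.Basis ι ℝ E) (g : ι → 𝓢(E, V))
    (hclosed : ∀ i j x, fderiv ℝ (g i) x (b j) = fderiv ℝ (g j) x (b i)) :
    ∃ f : 𝓢(E, V), ∀ i x, fderiv ℝ f x (b i) = g i x := by
  obtain ⟨ω, hω⟩ := exists_schwartzMap_forall_apply_basis_eq b g
  have hrank : 1 < Module.rank ℝ E := by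
    cases nonempty_fintype ι
    rw [rank_eq_card_basis b]
    exact_mod_cast Fintype.one_lt_card
  have hsymm (x u v : E) : fderiv ℝ ω x u v = fderiv ℝ ω x v u :=
    fderiv_symmetric_of_basis b ω.differentiableAt
      (fun i j ↦ by simpa only [hω] using hclosed i j x) u v
  obtain ⟨f, hf⟩ := exists_schwartzMap_hasFDerivAt_of_fderiv_symmetric hrank ω hsymm
  exact ⟨f, fun i x ↦ by rw [(hf x).fderiv, hω]⟩

end ClosedForm

/-- **Schwartz Poincaré lemma for `ℝⁿ`, `n ≥ 2`.**  Let `g₁, …, g_n ∈ 𝒮(ℝⁿ)` satisfy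
`∂_j g_i = ∂_i g_j` for all `i, j` (i.e. the 1-form `Σ gᵢ dxᵢ` is closed).  Then there
is a Schwartz function `f ∈ 𝒮(ℝⁿ)` with `∂_i f = g_i` for all `i`.  (This expresses
the vanishing of the first de Rham cohomology with Schwartz coefficients of `ℝⁿ` for
`n ≥ 2`, equivalently the vanishing of the Lie algebra homology `H_{n-1}` of the
translation module `𝒮(ℝⁿ)`.) -/
theorem schwartz_poincare_lemma (n : ℕ) (hn : 2 ≤ n)
    (g : Fin n → SchwartzMap (Fin n → ℝ) ℝ)
    (hclosed : ∀ (i j : Fin n) (x : Fin n → ℝ),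
      fderiv ℝ (g i) x (Pi.single j 1) = fderiv ℝ (g j) x (Pi.single i 1)) :
    ∃ f : SchwartzMap (Fin n → ℝ) ℝ,
      ∀ (i : Fin n) (x : Fin n → ℝ), fderiv ℝ f x (Pi.single i 1) = g i x := by
  have : Nontrivial (Fin n) := Fin.nontrivial_iff_two_le.2 hn
  simpa using schwartz_poincare_lemma_general (Pi.basisFun ℝ (Fin n)) g (by simpa using hclosed)
end
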